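/- arXiv:1611.09060 — 3 statements merged into one kernel-verified Lean document; each statement's English description precedes it below -/
import Mathlib

section
/- For integers t ≥ s ≥ 1 there exists an integer d such that every finite simple graph with no K_{s,t} topological minor is (s, d)-choosable. -/
/-!
The colouring is found by induction on the number of edges. A graph `G` with an edge and without a
subdivision of `K_{s,t}` has a non-isolated vertex of degree less than `s`, or a light edge: one
whose two ends have degree at most a constant `lightBound s t`, which is also the allowed defect
(`exists_light`). In the first case the edges at that vertex are deleted, the rest is coloured, and
the vertex receives a colour of its list absent from its neighbourhood. In the second case the light
edge is deleted and put back after colouring: its ends have too few neighbours to exceed the defect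
(`exists_colouring`).

Light edges exist for the following reason. Graphs without a subdivision of `K_{s,t}` have average
degree below a constant (Mader's theorem, `modelIn_of_degSum`). Its proof adds the edges of the
target graph one at a time: a dense graph contains a connected set `U` whose neighbourhood is still
dense (`exists_dense_nbhd`), and a subdivision of the target minus one edge inside that
neighbourhood is completed by a path through `U`.

Without light edges, let `B` be the set of vertices of large degree and `A` the other non-isolated
vertices; `A` is independent, and its vertices have at least `s` neighbours, all in `B`. Assign as
many vertices of `A` as possible injectively to pairs of their neighbours. The assigned pairs form
a graph `H` on `B` with a `1`-subdivision in `G`, so `H` is sparse and only linearly many vertices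
are assigned. The neighbourhood of an unassigned vertex is a clique of `H`; a sparse graph has
linearly many cliques, and fewer than `t` unassigned vertices share a neighbourhood since `G` has
no `K_{s,t}` subgraph. So `|A|` is linear in `|B|` (`card_le_of_nbhd_subset`), which contradicts
the bounded average degree when the degrees in `B` are large enough.
-/

open SimpleGraph

universe u v

section Defs

variable {V : Type u} {α : Type v}

/-- `H` is isomorphic to a subgraph of `G`: there is an injective graph homomorphism. -/
def ContainsSubgraph (G : SimpleGraph V) (H : SimpleGraph α) : Prop :=
  ∃ f : H →g G, Function.Injective f

/-- `G` is `(k,d)`-choosable: for every assignment of lists of exactly `k` colours there is a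
colouring from the lists in which every vertex has at most `d` neighbours of its own colour. -/
def Choosable (G : SimpleGraph V) (k : ℕ) (d : ℤ) : Prop :=
  ∀ L : V → Finset ℕ, (∀ v, (L v).card = k) →
    ∃ c : V → ℕ, (∀ v, c v ∈ L v) ∧
      ∀ v, (({w | G.Adj v w ∧ c w = c v}.ncard : ℤ)) ≤ d

/-- `G` is `(k,d)`-colourable: the vertices can be `k`-coloured with every vertex having at most
`d` neighbours of its own colour. -/
def DefColorable (G : SimpleGraph V) (k d : ℕ) : Prop :=
  ∃ c : V → Fin k, ∀ v, {w | G.Adj v w ∧ c w = c v}.ncard ≤ d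

/-- `H` is a minor of `G`, via pairwise disjoint connected branch sets. -/
def IsMinor (H : SimpleGraph α) (G : SimpleGraph V) : Prop :=
  ∃ B : α → Set V,
    (∀ a, (B a).Nonempty) ∧
    (∀ a, (G.induce (B a)).Connected) ∧
    (Pairwise fun a b => Disjoint (B a) (B b)) ∧
    (∀ a b, H.Adj a b → ∃ x ∈ B a, ∃ y ∈ B b, G.Adj x y)

/-- A subdivision of `H` whose path lengths all satisfy `lenOK` occurs as a subgraph of `G`:
the branch vertices are embedded injectively by `f`, each edge of `H` is replaced by a path of
`G` between the corresponding branch vertices, internal vertices of these paths avoid branch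
vertices, and distinct paths meet only in common endpoints. -/
def HasSubdivWith (G : SimpleGraph V) (H : SimpleGraph α) (lenOK : ℕ → Prop) : Prop :=
  ∃ f : α → V, Function.Injective f ∧
    ∃ P : ∀ ⦃a b : α⦄, H.Adj a b → G.Walk (f a) (f b),
      (∀ ⦃a b⦄ (h : H.Adj a b), (P h).IsPath ∧ lenOK (P h).length) ∧
      (∀ ⦃a b⦄ (h : H.Adj a b) (c : α), f c ∈ (P h).support → c = a ∨ c = b) ∧
      (∀ ⦃a b⦄ (h : H.Adj a b) ⦃a' b'⦄ (h' : H.Adj a' b'), s(a, b) ≠ s(a', b') →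
        ∀ x ∈ (P h).support, x ∈ (P h').support →
          (x = f a ∨ x = f b) ∧ (x = f a' ∨ x = f b'))

/-- Some `(≤ k)`-subdivision of `H` (each edge replaced by a path of length at most `k+1`)
is a subgraph of `G`. -/
def HasSubdivLE (G : SimpleGraph V) (k : ℕ) (H : SimpleGraph α) : Prop :=
  HasSubdivWith G H fun L => L ≤ k + 1

/-- `H` is a topological minor of `G`: some subdivision of `H` is a subgraph of `G`. -/
def HasTopMinor (G : SimpleGraph V) (H : SimpleGraph α) : Prop :=
  HasSubdivWith G H fun _ => True

/-- The exact `1`-subdivision of `H`: every edge is subdivided exactly once. -/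
def exactOneSubdivision (H : SimpleGraph α) : SimpleGraph (α ⊕ H.edgeSet) :=
  SimpleGraph.fromRel fun x y =>
    match x, y with
    | Sum.inl a, Sum.inr e => a ∈ (e : Sym2 α)
    | _, _ => False

/-- The graph `K*_{s,t}`: `K_{s,t}` together with `binom s 2` new vertices, each adjacent to a
distinct pair of vertices on the side of size `s`. -/
def KstarGraph (s t : ℕ) :
    SimpleGraph (Fin s ⊕ (Fin t ⊕ {p : Fin s × Fin s // p.1 < p.2})) :=
  SimpleGraph.fromRel fun x y =>
    match x, y with
    | Sum.inl _, Sum.inr (Sum.inl _) => True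
    | Sum.inl a, Sum.inr (Sum.inr c) => a = c.1.1 ∨ a = c.1.2
    | _, _ => False

/-- The auxiliary function `N₁(s,t,δ,δ₁)`. -/
noncomputable def N1 (s t : ℕ) (δ δ₁ : ℝ) : ℝ :=
  if s = 1 then (t : ℝ) - 1
  else if s = 2 then (δ - 2) * δ₁ * t / 2 + δ
  else (δ - s) * ((Nat.choose ⌊δ₁⌋₊ (s - 1) : ℝ) * ((t : ℝ) - 1) + δ₁ / 2) + δ

/-- The maximum average degree of `G`: maximum of `2|E(H)|/|V(H)|` over nonempty subgraphs. -/
noncomputable def mad [Fintype V] (G : SimpleGraph V) : ℝ :=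
  sSup {q : ℝ | ∃ H : G.Subgraph, H.verts.Nonempty ∧
    q = 2 * (H.edgeSet.ncard : ℝ) / (H.verts.ncard : ℝ)}

/-- `∇₀(G)`: maximum of `|E(H)|/|V(H)|` over nonempty subgraphs of `G`. -/
noncomputable def nabla0 [Fintype V] (G : SimpleGraph V) : ℝ :=
  sSup {q : ℝ | ∃ H : G.Subgraph, H.verts.Nonempty ∧
    q = (H.edgeSet.ncard : ℝ) / (H.verts.ncard : ℝ)}

/-- `∇₁(G)`: maximum of `|E(H)|/|V(H)|` over graphs `H` some `(≤2)`-subdivision of which is a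
subgraph of `G`. -/
noncomputable def nabla1 [Fintype V] (G : SimpleGraph V) : ℝ :=
  sSup {q : ℝ | ∃ (n : ℕ) (H : SimpleGraph (Fin n)), 0 < n ∧
    HasSubdivLE G 2 H ∧ q = (H.edgeSet.ncard : ℝ) / (n : ℝ)}

end Defs

/-- The vertex type of the graph `G(s,N)` (here indexed by `t = s - 2`). -/
def GVert : ℕ → ℕ → Type
  | 0, N => Fin (N + 2)
  | t + 1, N => Option (Fin (N + 1) × GVert t N)

/-- The graph `G(s,N)` (indexed by `t = s - 2`): `GGraph 0 N = G(2,N) = K_{1,N+1}`, and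
`GGraph (t+1) N = G(t+3,N)` is obtained from `N+1` disjoint copies of `GGraph t N` by adding
a dominant vertex. -/
def GGraph : (t : ℕ) → (N : ℕ) → SimpleGraph (GVert t N)
  | 0, N => SimpleGraph.fromRel fun i j => i = (0 : Fin (N + 2))
  | t + 1, N => SimpleGraph.fromRel fun x y =>
      match x, y with
      | none, some _ => True
      | some (i, a), some (j, b) => i = j ∧ (GGraph t N).Adj a b
      | _, _ => False

section More

variable {V : Type u} {α : Type v}

/-- `r` is a forest order witnessing that `H` is a subgraph of the closure of a rooted forest:
`r` is a partial order in which the set of ancestors of each vertex is a chain, and adjacent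
vertices of `H` are comparable. -/
def IsForestOrder (H : SimpleGraph α) (r : α → α → Prop) : Prop :=
  IsPartialOrder α r ∧ (∀ v : α, IsChain r {u | r u v}) ∧
    (∀ x y, H.Adj x y → r x y ∨ r y x)

/-- The tree-depth of `H`: the minimum height of a rooted forest whose closure contains `H`
as a subgraph (the height being measured as the maximum number of vertices on a
root--to--leaf path). -/
noncomputable def treeDepth (H : SimpleGraph α) : ℕ :=
  sInf {k | ∃ r : α → α → Prop, IsForestOrder H r ∧ ∀ v, {u | r u v}.ncard ≤ k}

/-- The vertex cover number `τ(H)`. -/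
noncomputable def vertexCoverNumber (H : SimpleGraph α) : ℕ :=
  sInf {k | ∃ S : Set α, S.ncard = k ∧ ∀ ⦃x y⦄, H.Adj x y → x ∈ S ∨ y ∈ S}

/-- The graph obtained from `ℓ` disjoint copies of the star `K_{1,k}` by adding one dominant
vertex. -/
def Hlk (l k : ℕ) : SimpleGraph (Option (Fin l × Fin (k + 1))) :=
  SimpleGraph.fromRel fun x y =>
    match x, y with
    | none, some _ => True
    | some (i, a), some (j, _) => i = j ∧ a = 0
    | _, _ => False

/-- The star `K_{1,k}` together with `m` isolated vertices. -/
def StarPlusIsolated (k m : ℕ) : SimpleGraph (Fin (k + 1) ⊕ Fin m) :=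
  SimpleGraph.fromRel fun x y =>
    match x, y with
    | Sum.inl i, Sum.inl _ => i = 0
    | _, _ => False

/-- `G` admits a `k`-stack layout: a linear ordering of the vertices (given by an injection
into `ℕ`) and an assignment of the edges to `k` stacks so that no two edges in a common stack
cross. -/
def HasStackLayout (G : SimpleGraph V) (k : ℕ) : Prop :=
  ∃ f : V → ℕ, Function.Injective f ∧
    ∃ σ : Sym2 V → Fin k,
      ∀ a b c d : V, G.Adj a b → G.Adj c d → σ s(a, b) = σ s(c, d) →
        ¬(f a < f c ∧ f c < f b ∧ f b < f d)

/-- `G` admits a `k`-queue layout: a linear ordering of the vertices (given by an injection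
into `ℕ`) and an assignment of the edges to `k` queues so that no two edges in a common queue
are nested. -/
def HasQueueLayout (G : SimpleGraph V) (k : ℕ) : Prop :=
  ∃ f : V → ℕ, Function.Injective f ∧
    ∃ σ : Sym2 V → Fin k,
      ∀ a b c d : V, G.Adj a b → G.Adj c d → σ s(a, b) = σ s(c, d) →
        ¬(f a < f c ∧ f c < f d ∧ f d < f b)

end More

/-! ### Dense neighbourhoods of connected sets -/

section Density

open Classical in
/-- The degree of `v` into the finite set `S`. -/
noncomputable def degIn {V : Type u} (G : SimpleGraph V) (S : Finset V) (v : V) : ℕ :=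
  (S.filter (G.Adj v)).card

/-- The degree sum of the subgraph induced on `S`, i.e. twice its number of edges. -/
noncomputable def degSum {V : Type u} (G : SimpleGraph V) (S : Finset V) : ℕ :=
  ∑ v ∈ S, degIn G S v

open Classical in
lemma degSum_erase {V : Type u} (G : SimpleGraph V) {S : Finset V} {w : V} (hw : w ∈ S) :
    degSum G S = degSum G (S.erase w) + 2 * degIn G S w := by
  have h1 : ∀ v, degIn G S v = degIn G (S.erase w) v + if G.Adj v w then 1 else 0 := by
    intro v
    unfold degIn
    conv_lhs => rw [← Finset.insert_erase hw]
    rw [Finset.filter_insert]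
    split_ifs with h
    · rw [Finset.card_insert_of_notMem (by simp)]
    · rfl
  have h2 : degIn G S w = ∑ v ∈ S.erase w, if G.Adj v w then 1 else 0 := by
    rw [h1 w]
    unfold degIn
    rw [Finset.card_filter]
    simp [G.adj_comm]
  unfold degSum
  rw [← Finset.add_sum_erase S _ hw, Finset.sum_congr rfl (fun v _ => h1 v),
    Finset.sum_add_distrib, ← h2]
  ring

open Classical in
lemma degIn_le_card {V : Type u} (G : SimpleGraph V) (S : Finset V) (v : V) :
    degIn G S v ≤ S.card := Finset.card_filter_le _ _

/-- `U` is connected, in rooted form: some vertex of `U` is joined to every vertex of `U` by a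
walk that stays in `U`. -/
def Rooted {V : Type u} (G : SimpleGraph V) (U : Finset V) : Prop :=
  ∃ r ∈ U, ∀ v ∈ U, ∃ p : G.Walk r v, ∀ x ∈ p.support, x ∈ U

open Classical in
lemma Rooted.insert {V : Type u} {G : SimpleGraph V} {U : Finset V} (h : Rooted G U) {u w : V}
    (hu : u ∈ U) (huw : G.Adj u w) : Rooted G (insert w U) := by
  obtain ⟨r, hr, hU⟩ := h
  refine ⟨r, Finset.mem_insert_of_mem hr, fun v hv => ?_⟩
  rcases Finset.mem_insert.1 hv with rfl | hv
  · obtain ⟨p, hp⟩ := hU u hu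
    refine ⟨p.concat huw, fun x hx => ?_⟩
    rw [Walk.support_concat] at hx
    simp only [List.mem_append, List.mem_singleton] at hx
    rcases hx with hx | rfl
    · exact Finset.mem_insert_of_mem (hp x hx)
    · exact Finset.mem_insert_self _ _
  · obtain ⟨p, hp⟩ := hU v hv
    exact ⟨p, fun x hx => Finset.mem_insert_of_mem (hp x hx)⟩

/-- Two vertices with neighbours in a connected set `U` are joined by a walk through `U`. -/
lemma Rooted.exists_walk {V : Type u} {G : SimpleGraph V} {U : Finset V} (h : Rooted G U)
    {x y : V} (hx : ∃ u ∈ U, G.Adj u x) (hy : ∃ u ∈ U, G.Adj u y) :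
    ∃ p : G.Walk x y, ∀ z ∈ p.support, z = x ∨ z = y ∨ z ∈ U := by
  obtain ⟨r, hr, hU⟩ := h
  obtain ⟨u, hu, hux⟩ := hx
  obtain ⟨v, hv, hvy⟩ := hy
  obtain ⟨p, hp⟩ := hU u hu
  obtain ⟨q, hq⟩ := hU v hv
  refine ⟨Walk.cons hux.symm (p.reverse.append (q.concat hvy)), fun z hz => ?_⟩
  simp only [Walk.support_cons, List.mem_cons, Walk.mem_support_append_iff, Walk.support_reverse,
    List.mem_reverse, Walk.support_concat, List.mem_append,
    List.not_mem_nil, or_false] at hz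
  rcases hz with rfl | hz | hz | rfl
  · exact Or.inl rfl
  · exact Or.inr (Or.inr (hp z hz))
  · exact Or.inr (Or.inr (hq z hz))
  · exact Or.inr (Or.inl rfl)

open Classical in
/-- The neighbours of `U` in `S \ U`. -/
noncomputable def nbhd {V : Type u} (G : SimpleGraph V) (S U : Finset V) : Finset V :=
  (S \ U).filter fun w => ∃ u ∈ U, G.Adj u w

open Classical in
/-- A set of large average degree contains a connected set `U` whose neighbourhood `N` induces a
subgraph of large minimum degree. Here `U` is a largest connected set whose contraction does not
lower the density: contracting one further vertex `w ∈ N` loses one edge plus one for each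
neighbour of `w` in `N`, so maximality forces `w` to have many neighbours in `N`. -/
lemma exists_dense_nbhd {V : Type u} (G : SimpleGraph V) (k : ℕ) (hk : 1 ≤ k) (S : Finset V) :
    S.Nonempty → 2 * k * S.card ≤ degSum G S →
    ∃ U N : Finset V, U ⊆ S ∧ N ⊆ S ∧ Disjoint U N ∧ N.Nonempty ∧ Rooted G U ∧
      (∀ w ∈ N, ∃ u ∈ U, G.Adj u w) ∧ ∀ w ∈ N, k ≤ degIn G N w := by
  induction S using Finset.strongInduction with
  | H S ih =>
  intro hS hD
  obtain ⟨v, hv⟩ := hS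
  -- the invariant says that contracting `U` leaves at least `k` edges per vertex
  let good : Finset V → Prop := fun U => Rooted G U ∧
    2 * k * ((S \ U).card + 1) ≤ degSum G (S \ U) + 2 * (nbhd G S U).card
  have hv_good : good {v} := by
    refine ⟨⟨v, by simp, fun x hx => ?_⟩, ?_⟩
    · obtain rfl : x = v := by simpa using hx
      exact ⟨Walk.nil, by simp⟩
    · have h1 : S \ {v} = S.erase v := by ext; simp [and_comm]
      have h2 : nbhd G S {v} = S.filter (G.Adj v) := by
        ext x
        simp only [nbhd, Finset.mem_filter, Finset.mem_sdiff, Finset.mem_singleton,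
          exists_eq_left]
        constructor
        · tauto
        · rintro ⟨h, h'⟩
          exact ⟨⟨h, h'.ne'⟩, h'⟩
      have h3 := degSum_erase G hv
      rw [h1, h2, Finset.card_erase_add_one hv]
      unfold degIn at h3
      omega
  obtain ⟨U, hU, hmax⟩ := Finset.exists_max_image (S.powerset.filter good) Finset.card
    ⟨{v}, by simp [hv, hv_good]⟩
  simp only [Finset.mem_filter, Finset.mem_powerset] at hU hmax
  obtain ⟨hUS, hUr, hUD⟩ := hU
  have hUne : U.Nonempty := by obtain ⟨r, hr, _⟩ := hUr; exact ⟨r, hr⟩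
  by_cases hN : (nbhd G S U).Nonempty
  · refine ⟨U, nbhd G S U, hUS, (Finset.filter_subset _ _).trans Finset.sdiff_subset, ?_, hN, hUr,
      fun w hw => (Finset.mem_filter.1 hw).2, fun w hw => ?_⟩
    · exact Finset.disjoint_left.2 fun x hx hx' =>
        (Finset.mem_sdiff.1 (Finset.mem_filter.1 hx').1).2 hx
    · have hw' := Finset.mem_filter.1 hw
      obtain ⟨hwSU, u, hu, huw⟩ := hw'
      have hwS := (Finset.mem_sdiff.1 hwSU).1
      have hwU := (Finset.mem_sdiff.1 hwSU).2
      have hbad : ¬ good (insert w U) := fun hg => by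
        have := hmax (insert w U) ⟨Finset.insert_subset hwS hUS, hg⟩
        rw [Finset.card_insert_of_notMem hwU] at this
        omega
      have hlt : degSum G (S \ insert w U) + 2 * (nbhd G S (insert w U)).card <
          2 * k * ((S \ insert w U).card + 1) := by
        by_contra! hge
        exact hbad ⟨hUr.insert hu huw, hge⟩
      have he : S \ insert w U = (S \ U).erase w := by
        ext x; simp only [Finset.mem_sdiff, Finset.mem_insert, Finset.mem_erase]; tauto
      have hsub : (nbhd G S U).erase w ∪ (((S \ U).filter (G.Adj w)) \
          ((nbhd G S U).filter (G.Adj w))) ⊆ nbhd G S (insert w U) := by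
        intro x hx
        simp only [nbhd, Finset.mem_union, Finset.mem_erase, Finset.mem_filter, Finset.mem_sdiff,
          Finset.mem_insert] at hx ⊢
        rcases hx with ⟨hxw, ⟨hxS, hxU⟩, u', hu', hux⟩ | ⟨⟨⟨hxS, hxU⟩, hwx⟩, _⟩
        · exact ⟨⟨hxS, by tauto⟩, u', Or.inr hu', hux⟩
        · exact ⟨⟨hxS, by rintro (rfl | h); exacts [hwx.ne rfl, hxU h]⟩, w, Or.inl rfl, hwx⟩
      have hcard := Finset.card_le_card hsub
      have hNSU : nbhd G S U ⊆ S \ U := Finset.filter_subset _ _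
      rw [Finset.card_union_of_disjoint, Finset.card_erase_of_mem hw,
        Finset.card_sdiff_of_subset (Finset.filter_subset_filter _ hNSU)]
        at hcard
      · have h3 := degSum_erase G hwSU
        have h4 : (S \ U).card = ((S \ U).erase w).card + 1 :=
          (Finset.card_erase_add_one hwSU).symm
        rw [he] at hlt
        rw [h4] at hUD
        have h5 := Finset.card_pos.2 hN
        unfold degIn at h3 ⊢
        have h6 : 2 * k * (((S \ U).erase w).card + 1 + 1) =
          2 * k * (((S \ U).erase w).card + 1) + 2 * k := by ring
        omega
      · refine Finset.disjoint_left.2 fun x hx hx' => ?_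
        simp only [Finset.mem_erase, Finset.mem_filter, Finset.mem_sdiff] at hx hx'
        exact hx'.2 ⟨hx.2, hx'.1.2⟩
  · -- `U` is a union of components of `S`, and the rest of `S` is still dense
    rw [Finset.not_nonempty_iff_eq_empty] at hN
    rw [hN, Finset.card_empty, mul_zero, add_zero] at hUD
    have hne : (S \ U).Nonempty := by
      by_contra hemp
      rw [Finset.not_nonempty_iff_eq_empty] at hemp
      rw [hemp] at hUD
      simp [degSum] at hUD
      omega
    obtain ⟨U', N, h1, h2, h3⟩ := ih (S \ U) (Finset.sdiff_ssubset hUS hUne) hne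
      (le_trans (Nat.mul_le_mul_left _ (Nat.le_succ _)) hUD)
    exact ⟨U', N, h1.trans Finset.sdiff_subset, h2.trans Finset.sdiff_subset, h3⟩

end Density

/-! ### Subdivisions and average degree -/

section Models

/-- A subdivision of `X` in `G` all of whose vertices lie in `S`, in a walk-light form: the branch
vertices are given by `f`, the internal vertices of the path for the edge `e` lie in `I e`, and the
sets `I e` are pairwise disjoint and avoid the branch vertices. -/
def ModelIn {V : Type u} {α : Type v} (G : SimpleGraph V) (S : Set V) (X : SimpleGraph α) : Prop :=
  ∃ f : α → V, Function.Injective f ∧ (∀ a, f a ∈ S) ∧ ∃ I : Sym2 α → Set V,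
    (∀ e, I e ⊆ S) ∧ (∀ e a, f a ∉ I e) ∧ (∀ e e', e ≠ e' → Disjoint (I e) (I e')) ∧
    ∀ a b, X.Adj a b → ∃ p : G.Walk (f a) (f b),
      ∀ x ∈ p.support, x = f a ∨ x = f b ∨ x ∈ I s(a, b)

lemma ModelIn.hasTopMinor {V : Type u} {α : Type v} {G : SimpleGraph V} {S : Set V}
    {X : SimpleGraph α} (h : ModelIn G S X) : HasTopMinor G X := by
  classical
  obtain ⟨f, hf, -, I, -, hfI, hII, hp⟩ := h
  choose p hp using hp
  have hp' : ∀ a b (h : X.Adj a b), ∀ x ∈ (p a b h).bypass.support,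
      x = f a ∨ x = f b ∨ x ∈ I s(a, b) :=
    fun a b h x hx => hp a b h x ((p a b h).support_bypass_subset_support hx)
  refine ⟨f, hf, fun a b h => (p a b h).bypass, fun a b h => ⟨Walk.bypass_isPath _, trivial⟩, ?_, ?_⟩
  · intro a b h c hc
    rcases hp' a b h _ hc with h | h | h
    · exact Or.inl (hf h)
    · exact Or.inr (hf h)
    · exact absurd h (hfI _ _)
  · intro a b h a' b' h' hne x hx hx'
    have h1 := hp' a b h x hx
    have h2 := hp' a' b' h' x hx'
    rcases h1 with rfl | rfl | h1
    · refine ⟨Or.inl rfl, ?_⟩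
      rcases h2 with h2 | h2 | h2
      exacts [Or.inl h2, Or.inr h2, absurd h2 (hfI _ _)]
    · refine ⟨Or.inr rfl, ?_⟩
      rcases h2 with h2 | h2 | h2
      exacts [Or.inl h2, Or.inr h2, absurd h2 (hfI _ _)]
    · rcases h2 with rfl | rfl | h2
      · exact absurd h1 (hfI _ _)
      · exact absurd h1 (hfI _ _)
      · exact absurd h2 (Set.disjoint_left.1 (hII _ _ hne) h1)

/-- A subdivision of `X` minus an edge inside the neighbourhood of a connected set `U` extends to a
subdivision of `X`: the missing path is routed through `U`. -/
lemma ModelIn.add_edge {V : Type u} {α : Type v} {G : SimpleGraph V} {S N U : Finset V}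
    {X : SimpleGraph α} {a b : α} (h : ModelIn G N (X.deleteEdges {s(a, b)}))
    (hUS : U ⊆ S) (hNS : N ⊆ S) (hUN : Disjoint U N) (hU : Rooted G U)
    (hN : ∀ w ∈ N, ∃ u ∈ U, G.Adj u w) : ModelIn G S X := by
  classical
  obtain ⟨f, hf, hfN, I, hIN, hfI, hII, hp⟩ := h
  have hUN' : ∀ x ∈ U, x ∉ N := fun x hx => Finset.disjoint_left.1 hUN hx
  refine ⟨f, hf, fun c => hNS (hfN c), Function.update I s(a, b) U, ?_, ?_, ?_, ?_⟩
  · intro e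
    by_cases he : e = s(a, b)
    · subst he; simpa using hUS
    · rw [Function.update_of_ne he]
      exact (hIN e).trans (by exact_mod_cast hNS)
  · intro e c
    by_cases he : e = s(a, b)
    · subst he
      rw [Function.update_self]
      exact fun hc => hUN' _ hc (hfN c)
    · rw [Function.update_of_ne he]; exact hfI e c
  · intro e e' hne
    rw [Set.disjoint_left]
    intro x hx hx'
    by_cases he : e = s(a, b)
    · have he' : e' ≠ s(a, b) := fun h => hne (he.trans h.symm)
      subst he
      rw [Function.update_self] at hx
      rw [Function.update_of_ne he'] at hx'
      exact hUN' _ hx (hIN _ hx')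
    · rw [Function.update_of_ne he] at hx
      by_cases he' : e' = s(a, b)
      · subst he'
        rw [Function.update_self] at hx'
        exact hUN' _ hx' (hIN _ hx)
      · rw [Function.update_of_ne he'] at hx'
        exact Set.disjoint_left.1 (hII _ _ hne) hx hx'
  · intro c d hcd
    by_cases he : s(c, d) = s(a, b)
    · rw [he, Function.update_self]
      exact hU.exists_walk (hN _ (hfN c)) (hN _ (hfN d))
    · rw [Function.update_of_ne he]
      exact hp c d (by simp [deleteEdges_adj, hcd, he])

/-- Mader's theorem: large average degree forces a subdivision of any fixed graph. -/
lemma modelIn_of_degSum {V : Type u} {α : Type v} [Fintype α] (G : SimpleGraph V) (m : ℕ) :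
    ∀ (X : SimpleGraph α) (S : Finset V), X.edgeSet.ncard ≤ m → S.Nonempty →
      (Fintype.card α + 1) * 2 ^ m * S.card ≤ degSum G S → ModelIn G S X := by
  classical
  induction m with
  | zero =>
    intro X S hX hS hD
    have hX0 : X.edgeSet = ∅ := (Set.ncard_eq_zero (Set.toFinite _)).1 (Nat.le_zero.1 hX)
    have h1 : degSum G S ≤ S.card * S.card := by
      unfold degSum
      calc ∑ v ∈ S, degIn G S v ≤ ∑ v ∈ S, S.card :=
            Finset.sum_le_sum fun v _ => degIn_le_card G S v
        _ = S.card * S.card := by simp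
    have h2 : Fintype.card α + 1 ≤ S.card := by
      have := hD.trans h1
      rw [pow_zero, mul_one] at this
      exact Nat.le_of_mul_le_mul_right this (Finset.card_pos.2 hS)
    obtain ⟨g⟩ : Nonempty (α ↪ S) :=
      Function.Embedding.nonempty_of_card_le (by simpa using (Nat.le_succ _).trans h2)
    refine ⟨fun a => g a, fun a b h => g.injective (Subtype.ext h), fun a => (g a).2,
      fun _ => ∅, by simp, by simp, by simp, fun a b hab => ?_⟩
    have : s(a, b) ∈ X.edgeSet := hab
    simp [hX0] at this
  | succ m ih =>
    intro X S hX hS hD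
    rcases Set.eq_empty_or_nonempty X.edgeSet with h0 | ⟨e, he⟩
    · refine ih X S (by simp [h0]) hS (le_trans ?_ hD)
      gcongr <;> omega
    · induction e using Sym2.ind with
      | _ a b =>
      obtain ⟨U, N, hUS, hNS, hUN, hNne, hU, hN, hdeg⟩ := exists_dense_nbhd G
        ((Fintype.card α + 1) * 2 ^ m) (Nat.mul_pos (Nat.succ_pos _) (by positivity)) S hS
        (le_trans (le_of_eq (by ring)) hD)
      refine ModelIn.add_edge (ih (X.deleteEdges {s(a, b)}) N ?_ hNne ?_) hUS hNS hUN hU hN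
      · rw [edgeSet_deleteEdges, Set.ncard_sdiff_singleton_of_mem he]
        omega
      · unfold degSum
        rw [mul_comm, ← smul_eq_mul]
        exact Finset.card_nsmul_le_sum _ _ _ hdeg

lemma exists_walk_subdiv {V : Type u} {G H : SimpleGraph V} (φ : Sym2 V → V)
    (hφ : ∀ a b, H.Adj a b → G.Adj a (φ s(a, b))) {u v : V} (p : H.Walk u v) :
    ∃ q : G.Walk u v, ∀ x ∈ q.support, x ∈ p.support ∨
      ∃ a b, a ∈ p.support ∧ b ∈ p.support ∧ H.Adj a b ∧ x = φ s(a, b) := by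
  induction p with
  | nil => exact ⟨Walk.nil, by simp⟩
  | @cons u w v h p ih =>
    obtain ⟨q, hq⟩ := ih
    have h2 : G.Adj (φ s(u, w)) w := by
      have := (hφ w u h.symm).symm
      rwa [Sym2.eq_swap] at this
    refine ⟨Walk.cons (hφ u w h) (Walk.cons h2 q), fun x hx => ?_⟩
    simp only [Walk.support_cons, List.mem_cons] at hx ⊢
    rcases hx with rfl | rfl | hx
    · exact Or.inl (Or.inl rfl)
    · exact Or.inr ⟨u, w, Or.inl rfl, Or.inr p.start_mem_support, h, rfl⟩
    · rcases hq x hx with hx | ⟨a, b, ha, hb, hab, rfl⟩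
      · exact Or.inl (Or.inr hx)
      · exact Or.inr ⟨a, b, Or.inr ha, Or.inr hb, hab, rfl⟩

/-- If `G` contains a `1`-subdivision of `H`, with branch vertices in `B` and the edge `e` of `H`
subdivided by `φ e ∉ B`, then a subdivision of `X` in `H` yields one in `G`. The paths of `G` for
two distinct edges of `X` share no subdivision vertex: it would come from an edge of `H` lying on
both paths of `H`, whose two ends would be branch vertices common to both edges of `X`. -/
lemma ModelIn.of_subdiv {V : Type u} {α : Type v} {G H : SimpleGraph V} {B : Set V}
    {X : SimpleGraph α} (φ : Sym2 V → V) (hφ : ∀ a b, H.Adj a b → G.Adj a (φ s(a, b)))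
    (hinj : Set.InjOn φ H.edgeSet) (hB : ∀ e ∈ H.edgeSet, φ e ∉ B) (h : ModelIn H B X) :
    ModelIn G Set.univ X := by
  obtain ⟨f, hf, hfB, I, hIB, hfI, hII, hp⟩ := h
  let W : Sym2 α → Set V := fun e => {x | x ∈ I e ∨ ∃ a ∈ e, x = f a}
  have hW : ∀ e e', e ≠ e' → ∀ x, x ∈ W e → x ∈ W e' → ∃ a, a ∈ e ∧ a ∈ e' ∧ x = f a := by
    rintro e e' hne x (hx | ⟨a, ha, rfl⟩) (hx' | ⟨a', ha', hx'⟩)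
    · exact absurd hx' (Set.disjoint_left.1 (hII _ _ hne) hx)
    · exact absurd (hx' ▸ hx) (hfI _ _)
    · exact absurd hx' (hfI _ _)
    · exact ⟨a, ha, by rwa [hf hx'], rfl⟩
  refine ⟨f, hf, fun _ => trivial,
    fun e => {x | x ∈ I e ∨ ∃ u v, u ∈ W e ∧ v ∈ W e ∧ H.Adj u v ∧ x = φ s(u, v)},
    fun _ => Set.subset_univ _, ?_, ?_, ?_⟩
  · rintro e a (h | ⟨u, v, -, -, huv, h⟩)
    · exact hfI _ _ h
    · exact hB _ huv (h ▸ hfB a)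
  · intro e e' hne
    rw [Set.disjoint_left]
    rintro x (hx | ⟨u, v, hu, hv, huv, rfl⟩) (hx' | ⟨u', v', hu', hv', huv', hx'⟩)
    · exact Set.disjoint_left.1 (hII _ _ hne) hx hx'
    · exact hB _ huv' (hx' ▸ hIB _ hx)
    · exact hB _ huv (hIB _ hx')
    · have heq : s(u, v) = s(u', v') := hinj huv huv' hx'
      have hu2 : u ∈ W e' ∧ v ∈ W e' := by
        rcases Sym2.eq_iff.1 heq with ⟨rfl, rfl⟩ | ⟨rfl, rfl⟩
        exacts [⟨hu', hv'⟩, ⟨hv', hu'⟩]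
      obtain ⟨a, ha, ha', rfl⟩ := hW e e' hne u hu hu2.1
      obtain ⟨b, hb, hb', rfl⟩ := hW e e' hne v hv hu2.2
      have hab : a ≠ b := fun h => huv.ne (by rw [h])
      exact hne (Sym2.eq_of_ne_mem hab ha hb ha' hb')
  · intro a b hab
    obtain ⟨p, hp⟩ := hp a b hab
    obtain ⟨q, hq⟩ := exists_walk_subdiv φ hφ p
    have hpW : ∀ x ∈ p.support, x ∈ W s(a, b) := by
      intro x hx
      rcases hp x hx with rfl | rfl | h
      · exact Or.inr ⟨a, by simp, rfl⟩
      · exact Or.inr ⟨b, by simp, rfl⟩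
      · exact Or.inl h
    refine ⟨q, fun x hx => ?_⟩
    rcases hq x hx with hx | ⟨u, v, hu, hv, huv, rfl⟩
    · rcases hp x hx with h | h | h
      · exact Or.inl h
      · exact Or.inr (Or.inl h)
      · exact Or.inr (Or.inr (Or.inl h))
    · exact Or.inr (Or.inr (Or.inr ⟨u, v, hpW u hu, hpW v hv, huv, rfl⟩))

end Models

/-! ### Light edges in graphs without a subdivision of `K_{s,t}` -/

section LightEdge

/-- The degree-sum-per-vertex threshold above which a subdivision of `X` is forced. -/
noncomputable def maderBound {α : Type v} [Fintype α] (X : SimpleGraph α) : ℕ :=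
  (Fintype.card α + 1) * 2 ^ X.edgeSet.ncard

lemma degSum_le_of_not_modelIn {V : Type u} {α : Type v} [Fintype α] {G : SimpleGraph V}
    {X : SimpleGraph α} {B : Set V} (h : ¬ ModelIn G B X) {S : Finset V} (hS : (S : Set V) ⊆ B) :
    degSum G S ≤ maderBound X * S.card := by
  rcases S.eq_empty_or_nonempty with rfl | hne
  · simp [degSum]
  · by_contra! hlt
    obtain ⟨f, h1, h2, I, h3, h4⟩ := modelIn_of_degSum G _ X S le_rfl hne hlt.le
    exact h ⟨f, h1, fun a => hS (h2 a), I, fun e => (h3 e).trans hS, h4⟩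

/-- A graph that is sparse on every subset of `B` is degenerate, so each vertex `b` has a bounded
set `o b` of later neighbours, and every clique lies in `{b} ∪ o b` for its first vertex `b`. -/
lemma exists_out_sets {V : Type u} [DecidableEq V] (H : SimpleGraph V) (C : ℕ) (B : Finset V) :
    (∀ S ⊆ B, degSum H S ≤ C * S.card) →
    ∃ o : V → Finset V, (∀ v, (o v).card ≤ C) ∧ ∀ T ⊆ B, T.Nonempty →
      (∀ a ∈ T, ∀ b ∈ T, a ≠ b → H.Adj a b) → ∃ b ∈ T, T ⊆ insert b (o b) := by
  classical
  induction B using Finset.strongInduction with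
  | H B ih =>
  intro hH
  rcases B.eq_empty_or_nonempty with rfl | hne
  · refine ⟨fun _ => ∅, by simp, fun T hT hTne => ?_⟩
    rw [Finset.subset_empty.1 hT] at hTne
    simp at hTne
  · obtain ⟨v, hv, hdeg⟩ : ∃ v ∈ B, degIn H B v ≤ C := by
      apply Finset.exists_le_of_sum_le hne
      have := hH B subset_rfl
      simpa [mul_comm, degSum] using this
    obtain ⟨o, ho, hT⟩ := ih (B.erase v) (Finset.erase_ssubset hv)
      (fun S hS => hH S (hS.trans (Finset.erase_subset _ _)))
    refine ⟨Function.update o v (B.filter (H.Adj v)), fun w => ?_, fun T hTB hTne hcl => ?_⟩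
    · by_cases hw : w = v
      · subst hw
        rw [Function.update_self]
        unfold degIn at hdeg
        exact hdeg
      · rw [Function.update_of_ne hw]; exact ho w
    · by_cases hvT : v ∈ T
      · refine ⟨v, hvT, fun x hx => ?_⟩
        rw [Function.update_self]
        by_cases hxv : x = v
        · simp [hxv]
        · exact Finset.mem_insert_of_mem
            (Finset.mem_filter.2 ⟨hTB hx, hcl v hvT x hx (Ne.symm hxv)⟩)
      · obtain ⟨b, hb, hTb⟩ := hT T (fun x hx => Finset.mem_erase.2
          ⟨fun h => hvT (h ▸ hx), hTB hx⟩) hTne hcl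
        refine ⟨b, hb, ?_⟩
        have hbv : b ≠ v := fun h => hvT (h ▸ hb)
        rw [Function.update_of_ne hbv]
        exact hTb

/-- A copy of `K_{s,t}` as a subgraph. -/
lemma modelIn_completeBipartite {V : Type u} {G : SimpleGraph V} {s t : ℕ} {T F : Finset V}
    (hT : s ≤ T.card) (hF : t ≤ F.card) (hTF : ∀ x ∈ F, ∀ y ∈ T, G.Adj x y) :
    ModelIn G Set.univ (completeBipartiteGraph (Fin s) (Fin t)) := by
  obtain ⟨g⟩ : Nonempty (Fin s ↪ T) := Function.Embedding.nonempty_of_card_le (by simpa using hT)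
  obtain ⟨g'⟩ : Nonempty (Fin t ↪ F) := Function.Embedding.nonempty_of_card_le (by simpa using hF)
  refine ⟨Sum.elim (fun i => g i) (fun i => g' i), ?_, fun _ => trivial, fun _ => ∅, by simp,
    by simp, by simp, ?_⟩
  · apply Function.Injective.sumElim
    · exact fun a b h => g.injective (Subtype.ext h)
    · exact fun a b h => g'.injective (Subtype.ext h)
    · exact fun a b h => (hTF _ (g' b).2 _ (g a).2).ne h.symm
  · rintro (a | a) (b | b) hab
    · simp at hab
    · exact ⟨(hTF _ (g' b).2 _ (g a).2).symm.toWalk, by simp⟩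
    · exact ⟨(hTF _ (g' a).2 _ (g b).2).toWalk, by simp⟩
    · simp at hab

/-- If `G` has no subdivision of `K_{s,t}`, there are only linearly many (in `|B|`) vertices outside
`B` whose neighbourhood lies in `B` and has size at least `s`. -/
lemma card_le_of_nbhd_subset {V : Type u} [Fintype V] {G : SimpleGraph V} {s t : ℕ} (hs : 1 ≤ s)
    (hno : ¬ ModelIn G Set.univ (completeBipartiteGraph (Fin s) (Fin t))) {C : ℕ}
    (hC : C = maderBound (completeBipartiteGraph (Fin s) (Fin t))) {A B : Finset V}
    (hAB : Disjoint A B) (hA : ∀ v ∈ A, s ≤ degIn G Finset.univ v)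
    (hN : ∀ v ∈ A, ∀ w, G.Adj v w → w ∈ B) :
    A.card ≤ (C + t * 2 ^ (C + 1)) * B.card := by
  classical
  -- a maximum set `M ⊆ A` of vertices assigned injectively to pairs of their neighbours
  let good : Finset V → Prop := fun M => ∃ g : V → V × V,
    (∀ v ∈ M, (g v).1 ≠ (g v).2 ∧ G.Adj v (g v).1 ∧ G.Adj v (g v).2) ∧
    ∀ v ∈ M, ∀ w ∈ M, s((g v).1, (g v).2) = s((g w).1, (g w).2) → v = w
  obtain ⟨M, hM, hmax⟩ := Finset.exists_max_image (A.powerset.filter good) Finset.card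
    ⟨∅, Finset.mem_filter.2 ⟨by simp, fun v => (v, v), by simp, by simp⟩⟩
  simp only [Finset.mem_filter, Finset.mem_powerset] at hM hmax
  obtain ⟨hMA, g, hg, hginj⟩ := hM
  -- the graph formed by the assigned pairs; `G` contains its `1`-subdivision
  let H : SimpleGraph V :=
    { Adj := fun a b => ∃ v ∈ M, s((g v).1, (g v).2) = s(a, b)
      symm := ⟨fun a b => by rintro ⟨v, hv, h⟩; exact ⟨v, hv, h.trans Sym2.eq_swap⟩⟩
      loopless := ⟨fun a => by
        rintro ⟨v, hv, h⟩
        rcases Sym2.eq_iff.1 h with ⟨h1, h2⟩ | ⟨h1, h2⟩ <;>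
          exact (hg v hv).1 (h1.trans h2.symm)⟩ }
  have hφ : ∀ e : Sym2 V, ∃ v, e ∈ H.edgeSet → v ∈ M ∧ s((g v).1, (g v).2) = e := by
    intro e
    induction e using Sym2.ind with
    | _ a b =>
    by_cases h : H.Adj a b
    · obtain ⟨v, hv, hvg⟩ := h
      exact ⟨v, fun _ => ⟨hv, hvg⟩⟩
    · exact ⟨a, fun h' => absurd h' h⟩
  choose φ hφ using hφ
  have hnoH : ¬ ModelIn H B (completeBipartiteGraph (Fin s) (Fin t)) := by
    refine fun hmod => hno (ModelIn.of_subdiv φ ?_ ?_ ?_ hmod)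
    · intro a b hab
      obtain ⟨h1, h2⟩ := hφ s(a, b) hab
      have h3 := hg _ h1
      rcases Sym2.eq_iff.1 h2 with ⟨h4, -⟩ | ⟨-, h4⟩
      · rw [h4] at h3; exact h3.2.1.symm
      · rw [h4] at h3; exact h3.2.2.symm
    · intro e he e' he' hee
      rw [← (hφ e he).2, ← (hφ e' he').2, hee]
    · intro e he hB
      exact Finset.disjoint_left.1 hAB (hMA (hφ e he).1) hB
  have hsparse : ∀ S ⊆ B, degSum H S ≤ C * S.card := fun S hS =>
    hC ▸ degSum_le_of_not_modelIn hnoH (by exact_mod_cast hS)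
  have hMcard : M.card ≤ C * B.card := by
    refine le_trans ?_ (hsparse B subset_rfl)
    have : degSum H B = (B.sigma fun v => B.filter (H.Adj v)).card := by
      rw [Finset.card_sigma]
      refine Finset.sum_congr rfl fun v _ => ?_
      unfold degIn
      congr
    rw [this]
    refine Finset.card_le_card_of_injOn (fun v => ⟨(g v).1, (g v).2⟩) ?_ ?_
    · intro v hv
      have h := hg v hv
      simp only [Finset.coe_sigma, Set.mem_sigma_iff, Finset.mem_coe, Finset.mem_filter]
      exact ⟨hN v (hMA hv) _ h.2.1, hN v (hMA hv) _ h.2.2, v, hv, rfl⟩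
    · intro v hv w hw h
      simp only [Sigma.mk.injEq, heq_eq_eq] at h
      exact hginj v hv w hw (by rw [h.1, h.2])
  obtain ⟨o, ho, hclique⟩ := exists_out_sets H C B hsparse
  let T : V → Finset V := fun v => Finset.univ.filter (G.Adj v)
  -- by maximality of `M`, unassigned vertices have a clique of `H` as neighbourhood
  have hTcl : ∀ v ∈ A \ M, ∃ b ∈ T v, T v ⊆ insert b (o b) := by
    intro v hv
    obtain ⟨hvA, hvM⟩ := Finset.mem_sdiff.1 hv
    refine hclique (T v) (fun w hw => hN v hvA w (by simpa [T] using hw))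
      (Finset.card_pos.1 (hs.trans (hA v hvA))) ?_
    intro a ha b hb hab
    replace ha : G.Adj v a := by simpa [T] using ha
    replace hb : G.Adj v b := by simpa [T] using hb
    by_contra hnot
    have hbig := hmax (insert v M) ⟨Finset.insert_subset hvA hMA,
      Function.update g v (a, b), ?_, ?_⟩
    · rw [Finset.card_insert_of_notMem hvM] at hbig
      omega
    · intro w hw
      by_cases hwv : w = v
      · subst hwv; simpa using ⟨hab, ha, hb⟩
      · rw [Function.update_of_ne hwv]
        exact hg w (Finset.mem_of_mem_insert_of_ne hw hwv)
    · intro w hw w' hw' heq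
      by_cases hwv : w = v <;> by_cases hwv' : w' = v
      · rw [hwv, hwv']
      · subst hwv
        rw [Function.update_self, Function.update_of_ne hwv'] at heq
        exact absurd ⟨w', Finset.mem_of_mem_insert_of_ne hw' hwv', heq.symm⟩ hnot
      · subst hwv'
        rw [Function.update_self, Function.update_of_ne hwv] at heq
        exact absurd ⟨w, Finset.mem_of_mem_insert_of_ne hw hwv, heq⟩ hnot
      · rw [Function.update_of_ne hwv, Function.update_of_ne hwv'] at heq
        exact hginj w (Finset.mem_of_mem_insert_of_ne hw hwv) w'
          (Finset.mem_of_mem_insert_of_ne hw' hwv') heq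
  have hb : ∀ v, ∃ b, v ∈ A \ M → b ∈ T v ∧ T v ⊆ insert b (o b) := by
    intro v
    by_cases hv : v ∈ A \ M
    · obtain ⟨b, hb⟩ := hTcl v hv
      exact ⟨b, fun _ => hb⟩
    · exact ⟨v, fun h => absurd h hv⟩
  choose b hb using hb
  let target : Finset (Σ _ : V, Finset V) := B.sigma fun x => (insert x (o x)).powerset
  have htarget : target.card ≤ 2 ^ (C + 1) * B.card := by
    rw [Finset.card_sigma, mul_comm, ← smul_eq_mul]
    refine Finset.sum_le_card_nsmul _ _ _ fun x _ => ?_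
    rw [Finset.card_powerset]
    exact Nat.pow_le_pow_right (by norm_num)
      ((Finset.card_insert_le _ _).trans (Nat.succ_le_succ (ho x)))
  have hrest : (A \ M).card ≤ t * target.card := by
    refine Finset.card_le_mul_card_image_of_maps_to
      (f := fun v => (⟨b v, T v⟩ : Σ _ : V, Finset V)) ?_ t ?_
    · intro v hv
      have hvA := (Finset.mem_sdiff.1 hv).1
      refine Finset.mem_sigma.2 ⟨hN v hvA _ ?_, Finset.mem_powerset.2 (hb v hv).2⟩
      simpa [T] using (hb v hv).1
    · -- `t` unassigned vertices with the same neighbourhood would give a `K_{s,t}` subgraph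
      rintro ⟨x, T₀⟩ -
      by_contra! hlt
      obtain ⟨v, hv⟩ := Finset.card_pos.1 (lt_of_le_of_lt (Nat.zero_le _) hlt)
      simp only [Finset.mem_filter, Sigma.mk.injEq, heq_eq_eq] at hv
      refine hno (modelIn_completeBipartite (T := T₀) ?_ hlt.le ?_)
      · rw [← hv.2.2]
        exact hA v (Finset.mem_sdiff.1 hv.1).1
      · intro w hw y hy
        simp only [Finset.mem_filter, Sigma.mk.injEq, heq_eq_eq] at hw
        rw [← hw.2.2] at hy
        simpa [T] using hy
  have hsplit := Finset.card_sdiff_add_card_eq_card hMA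
  calc A.card = (A \ M).card + M.card := hsplit.symm
    _ ≤ t * (2 ^ (C + 1) * B.card) + C * B.card :=
      add_le_add (hrest.trans (Nat.mul_le_mul_left _ htarget)) hMcard
    _ = (C + t * 2 ^ (C + 1)) * B.card := by ring

/-- The degree bound for light edges. -/
noncomputable def lightBound (s t : ℕ) : ℕ :=
  let C := maderBound (completeBipartiteGraph (Fin s) (Fin t))
  C * (C + t * 2 ^ (C + 1) + 1)

/-- A graph with an edge and no subdivision of `K_{s,t}` has a non-isolated vertex of degree less
than `s` or an edge both of whose ends have bounded degree. Otherwise the vertices of small positive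
degree form an independent set of size linear in the number of vertices of large degree, so the
average degree would be too large. -/
lemma exists_light {V : Type u} [Fintype V] {G : SimpleGraph V} {s t : ℕ} (hs : 1 ≤ s)
    (hno : ¬ ModelIn G Set.univ (completeBipartiteGraph (Fin s) (Fin t)))
    {x y : V} (hxy : G.Adj x y) :
    (∃ v, 1 ≤ degIn G Finset.univ v ∧ degIn G Finset.univ v < s) ∨
    ∃ u v, G.Adj u v ∧ degIn G Finset.univ u ≤ lightBound s t ∧
      degIn G Finset.univ v ≤ lightBound s t := by
  classical
  by_contra! hcon
  obtain ⟨hdeg, hlight⟩ := hcon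
  have hpos : ∀ {u v}, G.Adj u v → 1 ≤ degIn G Finset.univ u := fun {u v} h =>
    Finset.card_pos.2 ⟨v, by simpa using h⟩
  let A : Finset V := Finset.univ.filter fun v =>
    1 ≤ degIn G Finset.univ v ∧ degIn G Finset.univ v ≤ lightBound s t
  let B : Finset V := Finset.univ.filter fun v => lightBound s t < degIn G Finset.univ v
  have hAB : Disjoint A B := Finset.disjoint_left.2 fun v hA hB => by
    simp only [A, B, Finset.mem_filter] at hA hB; omega
  have hN : ∀ v ∈ A, ∀ w, G.Adj v w → w ∈ B := by
    intro v hv w hvw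
    simp only [A, B, Finset.mem_filter, Finset.mem_univ, true_and] at hv ⊢
    exact hlight v w hvw hv.2
  have hcard := card_le_of_nbhd_subset hs hno rfl hAB
    (fun v hv => hdeg v (Finset.mem_filter.1 hv).2.1) hN
  have hsum := degSum_le_of_not_modelIn hno (S := A ∪ B) (Set.subset_univ _)
  rw [Finset.card_union_of_disjoint hAB] at hsum
  have hB : B.card * (lightBound s t + 1) ≤ degSum G (A ∪ B) := by
    have hd : ∀ v, degIn G (A ∪ B) v = degIn G Finset.univ v := by
      intro v
      unfold degIn
      congr 1
      ext w
      simp only [A, B, Finset.mem_filter, Finset.mem_union, Finset.mem_univ, true_and,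
        and_iff_right_iff_imp]
      intro h
      have := hpos h.symm
      omega
    calc B.card * (lightBound s t + 1) ≤ ∑ v ∈ B, degIn G (A ∪ B) v := by
          rw [← smul_eq_mul]
          refine Finset.card_nsmul_le_sum _ _ _ fun v hv => ?_
          rw [hd]
          exact (Finset.mem_filter.1 hv).2
      _ ≤ degSum G (A ∪ B) := Finset.sum_le_sum_of_subset Finset.subset_union_right
  have hBpos : 1 ≤ B.card := by
    refine Finset.card_pos.2 ?_
    by_cases hx : x ∈ B
    · exact ⟨x, hx⟩
    · refine ⟨y, hN x ?_ y hxy⟩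
      simp only [A, B, Finset.mem_filter, Finset.mem_univ, true_and, not_lt] at hx ⊢
      exact ⟨hpos hxy, hx⟩
  simp only [lightBound] at hB
  set C := maderBound (completeBipartiteGraph (Fin s) (Fin t))
  set K := C + t * 2 ^ (C + 1)
  have h1 : C * (A.card + B.card) ≤ C * (K * B.card + B.card) :=
    Nat.mul_le_mul_left _ (Nat.add_le_add_right hcard _)
  have h2 := (hB.trans hsum).trans h1
  have h3 : B.card * (C * (K + 1) + 1) = C * (K * B.card + B.card) + B.card := by ring
  omega

end LightEdge

/-! ### Defective list colouring -/

section Colouring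

lemma HasTopMinor.mono {V : Type u} {α : Type v} {G G' : SimpleGraph V} {X : SimpleGraph α}
    (h : G' ≤ G) (hX : HasTopMinor G' X) : HasTopMinor G X := by
  obtain ⟨f, hf, P, h1, h2, h3⟩ := hX
  refine ⟨f, hf, fun a b hab => (P hab).mapLe h, fun a b hab => ⟨?_, trivial⟩, ?_, ?_⟩
  · exact (Walk.isPath_mapLe h).2 (h1 hab).1
  · simpa using h2
  · simpa using h3

open Classical in
/-- Defective list colouring by deleting the edges at a vertex of degree less than `s`, or a light
edge. The ends of a light edge have degree at most the allowed defect, so the edge can be put back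
without recolouring. -/
lemma exists_colouring {V : Type u} [Fintype V] {s t : ℕ} (hs : 1 ≤ s) (L : V → Finset ℕ)
    (hL : ∀ v, (L v).card = s) (n : ℕ) :
    ∀ G : SimpleGraph V, G.edgeSet.ncard = n →
      ¬ HasTopMinor G (completeBipartiteGraph (Fin s) (Fin t)) →
      ∃ c : V → ℕ, (∀ v, c v ∈ L v) ∧
        ∀ v, {w | G.Adj v w ∧ c w = c v}.ncard ≤ lightBound s t := by
  induction n using Nat.strong_induction_on with
  | _ n ih =>
  intro G hn hG
  have hdegle : ∀ (c : V → ℕ) v,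
      {w | G.Adj v w ∧ c w = c v}.ncard ≤ degIn G Finset.univ v := by
    intro c v
    unfold degIn
    rw [← Set.ncard_coe_finset]
    exact Set.ncard_le_ncard (fun w hw => by simpa using hw.1) (Set.toFinite _)
  have hdel : ∀ G' : SimpleGraph V, G' < G → ∃ c : V → ℕ, (∀ v, c v ∈ L v) ∧
        ∀ v, {w | G'.Adj v w ∧ c w = c v}.ncard ≤ lightBound s t := fun G' hlt =>
    ih _ (hn ▸ Set.ncard_lt_ncard (edgeSet_ssubset_edgeSet.2 hlt) (Set.toFinite _)) G' rfl
      fun h => hG (h.mono hlt.le)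
  by_cases hbot : ∃ x y, G.Adj x y
  · obtain ⟨x, y, hxy⟩ := hbot
    rcases exists_light hs (fun h => hG h.hasTopMinor) hxy with ⟨v, hv1, hvs⟩ | ⟨u, v, huv, hu, hv⟩
    · obtain ⟨w, hw⟩ := Finset.card_pos.1 hv1
      replace hw : G.Adj v w := by simpa using hw
      obtain ⟨c, hcL, hc⟩ := hdel (G.deleteEdges {e | v ∈ e})
        (lt_of_le_of_ne (G.deleteEdges_le _) fun h => by
          have := h ▸ hw
          simp [deleteEdges_adj] at this)
      obtain ⟨k, hk, hkN⟩ : ∃ k ∈ L v, k ∉ (Finset.univ.filter (G.Adj v)).image c := by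
        apply Finset.exists_mem_notMem_of_card_lt_card
        rw [hL]
        exact lt_of_le_of_lt Finset.card_image_le hvs
      have hkN' : ∀ x, G.Adj v x → c x ≠ k := fun x hx h =>
        hkN (Finset.mem_image.2 ⟨x, by simpa using hx, h⟩)
      refine ⟨Function.update c v k, fun x => ?_, fun x => ?_⟩
      · by_cases hx : x = v
        · subst hx; simpa using hk
        · rw [Function.update_of_ne hx]; exact hcL x
      · by_cases hx : x = v
        · subst hx
          have : {w | G.Adj x w ∧ Function.update c x k w = Function.update c x k x} = ∅ := by
            ext w
            simp only [Set.mem_ofPred_eq, Set.mem_empty_iff_false, iff_false, not_and,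
              Function.update_self]
            intro hxw
            rw [Function.update_of_ne hxw.ne']
            exact hkN' w hxw
          rw [this]
          simp
        · refine le_trans (Set.ncard_le_ncard (fun w hw => ?_) (Set.toFinite _)) (hc x)
          obtain ⟨h1, h2⟩ := hw
          rw [Function.update_of_ne hx] at h2
          by_cases hwv : w = v
          · subst hwv
            rw [Function.update_self] at h2
            exact absurd h2.symm (hkN' x h1.symm)
          · rw [Function.update_of_ne hwv] at h2
            refine ⟨?_, h2⟩
            simp [deleteEdges_adj, h1, Ne.symm hx, Ne.symm hwv]
    · obtain ⟨c, hcL, hc⟩ := hdel (G.deleteEdges {s(u, v)})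
        (lt_of_le_of_ne (G.deleteEdges_le _) fun h => by
          have := h ▸ huv
          simp [deleteEdges_adj] at this)
      refine ⟨c, hcL, fun x => ?_⟩
      by_cases hxu : x = u
      · subst hxu; exact (hdegle c x).trans hu
      by_cases hxv : x = v
      · subst hxv; exact (hdegle c x).trans hv
      refine le_trans (Set.ncard_le_ncard (fun w hw => ?_) (Set.toFinite _)) (hc x)
      refine ⟨?_, hw.2⟩
      simp [deleteEdges_adj, hw.1, hxu, hxv]
  · push Not at hbot
    have hne : ∀ v, ∃ k, k ∈ L v := fun v => Finset.card_pos.1 (by rw [hL]; exact hs)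
    choose c hc using hne
    exact ⟨c, hc, fun v => by simp [hbot]⟩

end Colouring

/-- For integers `t ≥ s ≥ 1` there exists an integer `d` such that every finite simple graph
with no `K_{s,t}` topological minor is `(s, d)`-choosable. -/
theorem stmt12 (s t : ℕ) (hs : 1 ≤ s) (hst : s ≤ t) :
    ∃ d : ℤ, ∀ (V : Type) [Fintype V] (G : SimpleGraph V),
      ¬ HasTopMinor G (completeBipartiteGraph (Fin s) (Fin t)) →
      Choosable G s d := by
  refine ⟨lightBound s t, fun V _ G hG L hL => ?_⟩
  obtain ⟨c, hc, hd⟩ := exists_colouring hs L hL _ G rfl hG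
  exact ⟨c, hc, fun v => by exact_mod_cast hd v⟩
end

section
/- For every finite simple graph H with at least one edge, there exists an integer d such that every finite simple graph with no H minor is (τ(H), d)-colourable, where τ(H) is the vertex cover number of H. -/
/-!
Let `T` be a minimum vertex cover of `H`, so `#T = τ(H) ≥ 1`, and let `G` have no `H` minor.

*Colouring.* It suffices that, for a constant `l` depending only on `H`, every graph without an `H`
minor that has an edge contains either a non-isolated vertex of degree less than `#T`, or a light
edge, one whose ends both have degree at most `l` (`exists_light_edge`). Induction on subgraphs then
gives a colouring with `#T` colours and defect `l` (`defColorable_of_light`): a vertex of degree less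
than `#T` receives a colour missing from its neighbourhood, and a light edge may be ignored, as its
ends cannot have more than `l` neighbours at all.

*Sparsity.* Large minimum degree forces a complete minor (`exists_minDegree_forces_clique`), so
graphs without an `H` minor are `c`-degenerate (`exists_degenerate_rank`).

*Light edges.* Suppose all non-isolated vertices have degree at least `#T` and no edge is light. Let
`A` be the set of non-isolated vertices of degree at most `l`, and `B` the set of vertices of degree
more than `l`. Then `A` is independent with all neighbours in `B`. Contract vertices of `A` one at a
time onto neighbours in `B`, each time creating a new edge between two of its neighbours, for as
long as possible (`exists_maximal_contraction`). The resulting graph is a minor of `G`, so it is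
degenerate on `B`; hence at most `c * #B` vertices are contracted, and there are at most
`2 ^ c * #B` cliques in `B`. By maximality each remaining vertex of `A` sees a clique of size `#T`.
If more than `|H|` of them see the same clique, then `H` embeds in the minor, with `T` mapped to the
clique. So `#A ≤ N * #B` for a constant `N` (`exists_independent_bound`), and for `l` large this
contradicts the linear bound on the number of edges.
-/

open SimpleGraph

universe u v

section DefectiveProof

open Finset
open scoped Classical

/-! ### Minors with prescribed vertex set -/

/-- `H` is a minor of `G` with all branch sets contained in the vertex set `S`. -/
def MinorIn {α W : Type} (H : SimpleGraph α) (G : SimpleGraph W) (S : Set W) : Prop :=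
  ∃ B : α → Set W,
    (∀ a, B a ⊆ S) ∧
    (∀ a, (G.induce (B a)).Connected) ∧
    (Pairwise fun a b => Disjoint (B a) (B b)) ∧
    (∀ a b, H.Adj a b → ∃ x ∈ B a, ∃ y ∈ B b, G.Adj x y)

theorem MinorIn.isMinor {α W : Type} {H : SimpleGraph α} {G : SimpleGraph W} {S : Set W}
    (h : MinorIn H G S) : IsMinor H G := by
  obtain ⟨B, -, hc, hd, ha⟩ := h
  exact ⟨B, fun a => Set.nonempty_coe_sort.1 (hc a).nonempty, hc, hd, ha⟩

theorem MinorIn.mono {α W : Type} {H : SimpleGraph α} {G G' : SimpleGraph W} {S S' : Set W}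
    (h : MinorIn H G S) (hG : G ≤ G') (hS : S ⊆ S') : MinorIn H G' S' := by
  obtain ⟨B, hs, hc, hd, ha⟩ := h
  refine ⟨B, fun a => (hs a).trans hS, fun a => (hc a).mono ?_, hd, fun a b hab => ?_⟩
  · exact SimpleGraph.comap_monotone _ hG
  · obtain ⟨x, hx, y, hy, hxy⟩ := ha a b hab
    exact ⟨x, hx, y, hy, hG hxy⟩

/-- A union of connected sets indexed by a connected set, with consecutive sets joined by an
edge, is connected. -/
theorem connected_biUnion {W V : Type} (M : SimpleGraph W) (G : SimpleGraph V) (D : W → Set V)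
    (X : Set W) (hD : ∀ w ∈ X, (G.induce (D w)).Connected)
    (hadj : ∀ w ∈ X, ∀ w' ∈ X, M.Adj w w' → ∃ x ∈ D w, ∃ y ∈ D w', G.Adj x y)
    (hX : (M.induce X).Connected) : (G.induce (⋃ w ∈ X, D w)).Connected := by
  have hsub : ∀ w ∈ X, D w ⊆ ⋃ w ∈ X, D w := fun w hw => Set.subset_biUnion_of_mem hw
  have hin : ∀ w (hw : w ∈ X) (p q : V) (hp : p ∈ D w) (hq : q ∈ D w),
      (G.induce (⋃ w ∈ X, D w)).Reachable ⟨p, hsub w hw hp⟩ ⟨q, hsub w hw hq⟩ := by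
    intro w hw p q hp hq
    exact ((hD w hw).preconnected ⟨p, hp⟩ ⟨q, hq⟩).map
      (SimpleGraph.induceHomOfLE G (hsub w hw)).toHom
  have key : ∀ u v : X, (M.induce X).Walk u v → ∀ (p q : V) (hp : p ∈ D u) (hq : q ∈ D v),
      (G.induce (⋃ w ∈ X, D w)).Reachable ⟨p, hsub u u.2 hp⟩ ⟨q, hsub v v.2 hq⟩ := by
    intro u v w
    induction w with
    | nil => intro p q hp hq; exact hin _ (Subtype.prop _) p q hp hq
    | @cons u v' v h _ ih =>
      intro p q hp hq
      obtain ⟨x, hx, y, hy, hxy⟩ := hadj u u.2 v' v'.2 h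
      refine (hin u u.2 p x hp hx).trans (.trans ?_ (ih y q hy hq))
      exact SimpleGraph.Adj.reachable (by simpa using hxy)
  rw [SimpleGraph.connected_iff]
  constructor
  · rintro ⟨p, hp⟩ ⟨q, hq⟩
    obtain ⟨u, hu, hp⟩ := Set.mem_iUnion₂.1 hp
    obtain ⟨v, hv, hq⟩ := Set.mem_iUnion₂.1 hq
    obtain ⟨w⟩ := hX.preconnected ⟨u, hu⟩ ⟨v, hv⟩
    exact key _ _ w p q hp hq
  · obtain ⟨u, hu⟩ := hX.nonempty
    obtain ⟨p, hp⟩ := (hD u hu).nonempty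
    exact ⟨⟨p, hsub u hu hp⟩⟩

/-- Minors compose: `D` presents `M`, restricted to `S`, as a minor of `G` inside `T`. -/
theorem MinorIn.comp {α W V : Type} {H : SimpleGraph α} {M : SimpleGraph W} {S : Set W}
    (h : MinorIn H M S) (G : SimpleGraph V) (T : Set V) (D : W → Set V)
    (hT : ∀ w ∈ S, D w ⊆ T)
    (hD : ∀ w ∈ S, (G.induce (D w)).Connected)
    (hdis : ∀ w ∈ S, ∀ w' ∈ S, w ≠ w' → Disjoint (D w) (D w'))
    (hadj : ∀ w ∈ S, ∀ w' ∈ S, M.Adj w w' → ∃ x ∈ D w, ∃ y ∈ D w', G.Adj x y) :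
    MinorIn H G T := by
  obtain ⟨B, hs, hc, hd, ha⟩ := h
  refine ⟨fun a => ⋃ w ∈ B a, D w, ?_, ?_, ?_, ?_⟩
  · intro a
    exact Set.iUnion₂_subset fun w hw => hT w (hs a hw)
  · intro a
    exact connected_biUnion M G D (B a) (fun w hw => hD w (hs a hw))
      (fun w hw w' hw' => hadj w (hs a hw) w' (hs a hw')) (hc a)
  · intro a b hab
    simp only [Set.disjoint_iUnion_left, Set.disjoint_iUnion_right]
    intro w hw w' hw'
    refine hdis _ (hs _ ‹_›) _ (hs _ ‹_›) ?_
    rintro rfl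
    exact Set.disjoint_left.1 (hd hab) ‹_› ‹_›
  · intro a b hab
    obtain ⟨x, hx, y, hy, hxy⟩ := ha a b hab
    obtain ⟨p, hp, q, hq, hpq⟩ := hadj x (hs a hx) y (hs b hy) hxy
    exact ⟨p, Set.mem_biUnion hx hp, q, Set.mem_biUnion hy hq, hpq⟩

theorem connected_singleton {V : Type} (G : SimpleGraph V) (v : V) :
    (G.induce ({v} : Set V)).Connected := by
  rw [SimpleGraph.connected_iff]
  exact ⟨fun a b => (Subsingleton.elim a b) ▸ .refl _, ⟨⟨v, rfl⟩⟩⟩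

theorem connected_star {V : Type} (G : SimpleGraph V) (v : V) (X : Set V)
    (hX : ∀ x ∈ X, G.Adj v x) : (G.induce (insert v X)).Connected := by
  have key : ∀ y : (insert v X : Set V),
      (G.induce (insert v X)).Reachable ⟨v, Set.mem_insert _ _⟩ y := by
    rintro ⟨y, rfl | hy⟩
    · exact .refl _
    · exact SimpleGraph.Adj.reachable (by simpa using hX y hy)
  rw [SimpleGraph.connected_iff]
  exact ⟨fun a b => (key a).symm.trans (key b), ⟨⟨v, Set.mem_insert _ _⟩⟩⟩

/-! ### Large minimum degree forces a complete minor -/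

/-- The contraction of the edge `xy` onto `x`; the vertex `y` stays in the type, isolated. -/
def contractEdge {V : Type} (G : SimpleGraph V) (x y : V) : SimpleGraph V :=
  SimpleGraph.fromRel fun u v => u ≠ y ∧ v ≠ y ∧ (G.Adj u v ∨ (u = x ∧ G.Adj y v))

theorem contractEdge_minorIn {α V : Type} {H : SimpleGraph α} {G : SimpleGraph V} {x y : V}
    {S : Finset V} (hxy : G.Adj x y) (hx : x ∈ S) (hy : y ∈ S)
    (h : MinorIn H (contractEdge G x y) (S.erase y : Finset V)) :
    MinorIn H G (S : Set V) := by
  refine h.comp G S (fun v => if v = x then {x, y} else {v}) ?_ ?_ ?_ ?_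
  · intro w hw
    split_ifs with hwx
    · intro z; simp; rintro (rfl | rfl) <;> assumption
    · simp at hw; simp [hw.1]
  · intro w hw
    by_cases hwx : w = x
    · rw [if_pos hwx]
      exact connected_star G x {y} (by simpa using hxy)
    · rw [if_neg hwx]
      exact connected_singleton G w
  · intro w hw w' hw' hne
    simp at hw hw'
    split_ifs with h1 h2 h2
    · exact absurd (h1.trans h2.symm) hne
    · simp; grind
    · simp; grind
    · simpa using hne
  · intro w hw w' hw' hadj
    simp only [contractEdge, SimpleGraph.fromRel_adj] at hadj
    have e1 : ∀ v, v ∈ (if v = x then ({x, y} : Set V) else {v}) := by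
      intro v; split_ifs with h <;> simp [h]
    obtain ⟨-, ⟨-, -, h1 | ⟨rfl, h1⟩⟩ | ⟨-, -, h1 | ⟨rfl, h1⟩⟩⟩ := hadj
    · exact ⟨w, e1 w, w', e1 w', h1⟩
    · exact ⟨y, by simp, w', e1 w', h1⟩
    · exact ⟨w, e1 w, w', e1 w', h1.symm⟩
    · exact ⟨w, e1 w, y, by simp, h1.symm⟩

/-- Contracting `xy` destroys the edge itself and one edge per common neighbour. -/
theorem card_edgeFinset_contractEdge {V : Type} [Fintype V] (G : SimpleGraph V) {x y : V}
    (hxy : G.Adj x y) :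
    #G.edgeFinset ≤ #(contractEdge G x y).edgeFinset
      + #(G.neighborFinset x ∩ G.neighborFinset y) + 1 := by
  set I := G.neighborFinset y \ insert x (G.neighborFinset x ∩ G.neighborFinset y) with hI
  have hsub : (G.edgeFinset \ G.incidenceFinset y) ∪ I.image (fun w => s(x, w)) ⊆
      (contractEdge G x y).edgeFinset := by
    intro e he
    rw [Finset.mem_union] at he
    rcases he with he | he
    · induction e with
      | _ a b =>
        simp only [Finset.mem_sdiff, SimpleGraph.mem_edgeFinset, SimpleGraph.mem_edgeSet,
          SimpleGraph.mem_incidenceFinset, SimpleGraph.mk'_mem_incidenceSet_iff] at he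
        rw [SimpleGraph.mem_edgeFinset, SimpleGraph.mem_edgeSet, contractEdge,
          SimpleGraph.fromRel_adj]
        have := he.1.ne
        grind
    · obtain ⟨w, hw, rfl⟩ := Finset.mem_image.1 he
      simp only [hI, Finset.mem_sdiff, Finset.mem_insert, Finset.mem_inter,
        SimpleGraph.mem_neighborFinset] at hw
      rw [SimpleGraph.mem_edgeFinset, SimpleGraph.mem_edgeSet, contractEdge,
        SimpleGraph.fromRel_adj]
      have := hw.1.ne
      have := hxy.ne
      grind
  have hdis : Disjoint (G.edgeFinset \ G.incidenceFinset y) (I.image (fun w => s(x, w))) := by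
    rw [Finset.disjoint_left]
    intro e he he'
    obtain ⟨w, hw, rfl⟩ := Finset.mem_image.1 he'
    simp only [hI, Finset.mem_sdiff, Finset.mem_insert, Finset.mem_inter,
        SimpleGraph.mem_neighborFinset] at hw
    simp only [Finset.mem_sdiff, SimpleGraph.mem_edgeFinset, SimpleGraph.mem_edgeSet] at he
    exact hw.2 (Or.inr ⟨he.1, hw.1⟩)
  have h1 := Finset.card_le_card hsub
  rw [Finset.card_union_of_disjoint hdis, Finset.card_image_of_injective _
    (fun a b h => Sym2.congr_right.1 h)] at h1
  have h2 : #G.edgeFinset ≤ #(G.edgeFinset \ G.incidenceFinset y) + #(G.incidenceFinset y) :=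
    Finset.card_le_card_sdiff_add_card
  have h3 : #(G.neighborFinset y) ≤
      #I + #(insert x (G.neighborFinset x ∩ G.neighborFinset y)) :=
    Finset.card_le_card_sdiff_add_card
  have h4 := Finset.card_insert_le x (G.neighborFinset x ∩ G.neighborFinset y)
  rw [SimpleGraph.card_incidenceFinset_eq_degree, ← SimpleGraph.card_neighborFinset_eq_degree] at h2
  omega

/-- A complete minor in the neighbourhood of `v` extends by the branch set `{v}`. -/
theorem MinorIn.cons {V : Type} [Fintype V] {G : SimpleGraph V} {n : ℕ} {v : V} {S : Set V}
    (hv : v ∈ S) (hN : ∀ w, G.Adj v w → w ∈ S)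
    (h : MinorIn (⊤ : SimpleGraph (Fin n)) G (G.neighborFinset v : Set V)) :
    MinorIn (⊤ : SimpleGraph (Fin (n + 1))) G S := by
  obtain ⟨B, hs, hc, hd, ha⟩ := h
  have hs' : ∀ a, ∀ w ∈ B a, G.Adj v w := fun a w hw => by simpa using hs a hw
  refine ⟨Fin.cons {v} B, ?_, ?_, ?_, ?_⟩
  · intro a
    refine Fin.cases ?_ (fun i => ?_) a
    · simpa using hv
    · intro w hw
      exact hN w (hs' i w (by simpa using hw))
  · intro a
    refine Fin.cases ?_ (fun i => ?_) a
    · exact connected_singleton G v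
    · exact hc i
  · intro a b
    refine Fin.cases ?_ (fun i => ?_) a <;> refine Fin.cases ?_ (fun j => ?_) b
    · simp
    · intro _
      simpa using fun h => (hs' j v h).ne rfl
    · intro _
      simpa using fun h => (hs' i v h).ne rfl
    · intro hij
      simpa using hd (fun h => hij (congrArg Fin.succ h))
  · intro a b
    refine Fin.cases ?_ (fun i => ?_) a <;> refine Fin.cases ?_ (fun j => ?_) b
    · simp
    · intro _
      obtain ⟨w, hw⟩ := (hc j).nonempty
      exact ⟨v, by simp, w, by simpa using hw, hs' j w hw⟩
    · intro _
      obtain ⟨w, hw⟩ := (hc i).nonempty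
      exact ⟨w, by simpa using hw, v, by simp, (hs' i w hw).symm⟩
    · intro hij
      simpa using ha i j (by simpa using hij)

/-- Mader: large minimum degree within `S` forces a complete minor within `S`. If every edge has
many common neighbours then a neighbourhood has large minimum degree and induction on the order
of the clique applies; otherwise some edge can be contracted while keeping the edge density. -/
theorem exists_minDegree_forces_clique (n : ℕ) : ∃ c : ℕ, ∀ (V : Type) [Fintype V]
    (G : SimpleGraph V) (S : Finset V), S.Nonempty → (∀ v ∈ S, c ≤ #(S.filter (G.Adj v))) →
    MinorIn (⊤ : SimpleGraph (Fin n)) G (S : Set V) := by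
  induction n with
  | zero =>
    exact ⟨0, fun V _ G S _ _ => ⟨fun a => a.elim0, fun a => a.elim0, fun a => a.elim0,
      fun a => a.elim0, fun a => a.elim0⟩⟩
  | succ n ih =>
    obtain ⟨c, hc⟩ := ih
    have edge : ∀ (m : ℕ) (V : Type) [Fintype V] (G : SimpleGraph V) (S : Finset V), #S = m →
        S.Nonempty → (∀ u v, G.Adj u v → u ∈ S) → (c + 1) * #S ≤ #G.edgeFinset →
        MinorIn (⊤ : SimpleGraph (Fin (n + 1))) G (S : Set V) := by
      intro m
      induction m with
      | zero =>
        intro V _ G S h hne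
        rw [Finset.card_eq_zero] at h
        simp [h] at hne
      | succ m ihm =>
        intro V _ G S hm hne hsupp hE
        by_cases hlight : ∃ x y, G.Adj x y ∧ #(G.neighborFinset x ∩ G.neighborFinset y) ≤ c
        · obtain ⟨x, y, hxy, hcommon⟩ := hlight
          have hx := hsupp _ _ hxy
          have hy := hsupp _ _ hxy.symm
          refine contractEdge_minorIn hxy hx hy (ihm V _ _ ?_ ?_ ?_ ?_)
          · rw [Finset.card_erase_of_mem hy, hm]; rfl
          · exact ⟨x, by simp [hx, hxy.ne]⟩
          · intro u v huv
            simp only [contractEdge, SimpleGraph.fromRel_adj] at huv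
            rw [Finset.mem_erase]
            obtain ⟨-, ⟨h1, -, h2 | ⟨rfl, h2⟩⟩ | ⟨-, h1, h2 | ⟨rfl, h2⟩⟩⟩ := huv
            · exact ⟨h1, hsupp _ _ h2⟩
            · exact ⟨h1, hx⟩
            · exact ⟨h1, hsupp _ _ h2.symm⟩
            · exact ⟨h1, hsupp _ _ h2.symm⟩
          · have := card_edgeFinset_contractEdge G hxy
            rw [Finset.card_erase_of_mem hy, hm]
            rw [hm] at hE
            have : (c + 1) * (m + 1) = (c + 1) * m + c + 1 := by ring
            have : (c + 1) * (m + 1 - 1) = (c + 1) * m := by simp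
            omega
        · push Not at hlight
          have hpos : 0 < #G.edgeFinset :=
            lt_of_lt_of_le (Nat.mul_pos (Nat.succ_pos c) hne.card_pos) hE
          obtain ⟨e, he⟩ := Finset.card_pos.1 hpos
          induction e with
          | _ v y =>
            have hvy : G.Adj v y := by simpa using he
            refine MinorIn.cons (hsupp _ _ hvy) (fun w hw => hsupp _ _ hw.symm)
              (hc V G _ ⟨y, by simpa using hvy⟩ ?_)
            intro w hw
            rw [SimpleGraph.mem_neighborFinset] at hw
            refine (hlight v w hw).le.trans (Finset.card_le_card ?_)
            intro z hz
            simpa using hz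
    refine ⟨2 * (c + 1), fun V _ G S hne hdeg => ?_⟩
    obtain ⟨G', hG'⟩ : ∃ G' : SimpleGraph V,
        ∀ u v, G'.Adj u v ↔ u ∈ S ∧ v ∈ S ∧ G.Adj u v := by
      refine ⟨SimpleGraph.fromRel fun u v => u ∈ S ∧ v ∈ S ∧ G.Adj u v, fun u v => ?_⟩
      simp only [SimpleGraph.fromRel_adj]
      have := G.adj_comm u v
      have := fun h : G.Adj u v => h.ne
      grind
    refine (edge _ V G' S rfl hne (fun u v h => ((hG' u v).1 h).1) ?_).mono
      (fun u v h => ((hG' u v).1 h).2.2) subset_rfl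
    have h1 := G'.sum_degrees_eq_twice_card_edges
    have h2 : ∑ v ∈ S, 2 * (c + 1) ≤ ∑ v, G'.degree v := by
      refine (Finset.sum_le_sum fun v hv => ?_).trans
        (Finset.sum_le_sum_of_subset (Finset.subset_univ S))
      rw [← SimpleGraph.card_neighborFinset_eq_degree]
      refine (hdeg v hv).trans (Finset.card_le_card ?_)
      intro w hw
      rw [Finset.mem_filter] at hw
      rw [SimpleGraph.mem_neighborFinset, hG']
      exact ⟨hv, hw.1, hw.2⟩
    rw [Finset.sum_const, smul_eq_mul] at h2
    have : #S * (2 * (c + 1)) = 2 * ((c + 1) * #S) := by ring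
    omega

theorem MinorIn.of_top {α W : Type} [Fintype α] (H : SimpleGraph α) {G : SimpleGraph W}
    {S : Set W} (h : MinorIn (⊤ : SimpleGraph (Fin (Fintype.card α))) G S) : MinorIn H G S := by
  obtain ⟨B, hs, hc, hd, ha⟩ := h
  let e := Fintype.equivFin α
  exact ⟨fun a => B (e a), fun a => hs _, fun a => hc _,
    fun a b hab => hd (fun h => hab (e.injective h)),
    fun a b hab => ha _ _ (by simpa using hab.ne)⟩

/-! ### Degeneracy -/

/-- Graphs without an `H` minor are degenerate: the vertices of `S` can be ranked so that each
has a bounded number of neighbours in `S` of higher rank. -/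
theorem exists_degenerate_rank {α : Type} [Fintype α] (H : SimpleGraph α) :
    ∃ c : ℕ, ∀ (V : Type) [Fintype V] (G : SimpleGraph V) (S : Finset V),
      ¬ MinorIn H G (S : Set V) → ∃ r : V → ℕ, Set.InjOn r S ∧
        ∀ v ∈ S, #(S.filter fun w => G.Adj v w ∧ r v < r w) ≤ c := by
  obtain ⟨c, hc⟩ := exists_minDegree_forces_clique (Fintype.card α)
  refine ⟨c, fun V _ G S => ?_⟩
  induction S using Finset.strongInduction with
  | H S ih =>
    intro hS
    rcases S.eq_empty_or_nonempty with rfl | hne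
    · exact ⟨fun _ => 0, by simp, by simp⟩
    · obtain ⟨v, hv, hdeg⟩ : ∃ v ∈ S, #(S.filter (G.Adj v)) < c := by
        by_contra! hcon
        exact hS (MinorIn.of_top H (hc V G S hne hcon))
      have herase : S.erase v ⊂ S := Finset.erase_ssubset hv
      obtain ⟨r, hr, hr'⟩ := ih _ herase
        (fun h => hS (h.mono le_rfl (by exact_mod_cast herase.subset)))
      refine ⟨fun w => if w = v then 0 else r w + 1, ?_, ?_⟩
      · intro a ha b hb hab
        have := @hr a
        simp only [Finset.coe_erase, Set.mem_sdiff, Set.mem_singleton_iff] at this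
        by_cases h1 : a = v <;> by_cases h2 : b = v
        · rw [h1, h2]
        · simp [h1, h2] at hab
        · simp [h1, h2] at hab
        · simp only [h1, h2, if_false, add_left_inj] at hab
          exact this ⟨ha, h1⟩ (⟨hb, h2⟩) hab
      · intro w hw
        by_cases hwv : w = v
        · subst hwv
          refine (Finset.card_le_card ?_).trans hdeg.le
          intro z hz
          simp only [Finset.mem_filter] at hz ⊢
          exact ⟨hz.1, hz.2.1⟩
        · refine (Finset.card_le_card ?_).trans (hr' w (Finset.mem_erase.2 ⟨hwv, hw⟩))
          intro z hz
          simp only [Finset.mem_filter, Finset.mem_erase, if_neg hwv] at hz ⊢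
          by_cases hzv : z = v
          · simp [hzv] at hz
          · simp only [if_neg hzv] at hz
            exact ⟨⟨hzv, hz.1⟩, hz.2.1, by omega⟩

theorem card_upward_pairs_le {V : Type} (G : SimpleGraph V) (S : Finset V)
    (r : V → ℕ) (c : ℕ) (h : ∀ v ∈ S, #(S.filter fun w => G.Adj v w ∧ r v < r w) ≤ c) :
    #((S ×ˢ S).filter fun p => G.Adj p.1 p.2 ∧ r p.1 < r p.2) ≤ c * #S := by
  have : #((S ×ˢ S).filter fun p => G.Adj p.1 p.2 ∧ r p.1 < r p.2) =
      ∑ v ∈ S, #(S.filter fun w => G.Adj v w ∧ r v < r w) := by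
    simp only [Finset.card_filter, Finset.sum_product]
  rw [this, mul_comm]
  exact Finset.sum_le_card_nsmul _ _ _ h

theorem sum_degree_le {V : Type} [Fintype V] (G : SimpleGraph V) (S : Finset V)
    (r : V → ℕ) (hr : Set.InjOn r S) (c : ℕ)
    (h : ∀ v ∈ S, #(S.filter fun w => G.Adj v w ∧ r v < r w) ≤ c) :
    ∑ v ∈ S, #(S.filter (G.Adj v)) ≤ 2 * c * #S := by
  have h1 := card_upward_pairs_le G S r c h
  have h2 : ∑ v ∈ S, #(S.filter (G.Adj v)) = #((S ×ˢ S).filter fun p => G.Adj p.1 p.2) := by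
    simp only [Finset.card_filter, Finset.sum_product]
  have h3 : ((S ×ˢ S).filter fun p => G.Adj p.1 p.2) ⊆
      ((S ×ˢ S).filter fun p => G.Adj p.1 p.2 ∧ r p.1 < r p.2) ∪
      ((S ×ˢ S).filter fun p => G.Adj p.1 p.2 ∧ r p.1 < r p.2).image Prod.swap := by
    rintro ⟨u, v⟩ huv
    simp only [Finset.mem_filter, Finset.mem_product] at huv
    simp only [Finset.mem_union, Finset.mem_filter, Finset.mem_product, Finset.mem_image,
      Prod.exists, Prod.swap_prod_mk, Prod.mk.injEq]
    have hne : r u ≠ r v := fun h => huv.2.ne (hr huv.1.1 huv.1.2 h)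
    rcases lt_or_gt_of_ne hne with hlt | hlt
    · exact Or.inl ⟨huv.1, huv.2, hlt⟩
    · exact Or.inr ⟨v, u, ⟨⟨huv.1.2, huv.1.1⟩, huv.2.symm, hlt⟩, rfl, rfl⟩
  have h4 := (Finset.card_le_card h3).trans (Finset.card_union_le _ _)
  have h5 := Finset.card_image_le (f := Prod.swap)
    (s := (S ×ˢ S).filter fun p => G.Adj p.1 p.2 ∧ r p.1 < r p.2)
  rw [h2, mul_assoc]
  omega

/-- A degenerate graph on `S` has at most `#S * 2 ^ c` cliques, since each consists of its lowest
vertex and a set of upward neighbours of that vertex. Hence if the vertices of a large set `A` are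
each assigned a clique `K a`, some clique is assigned to more than `t` of them. -/
theorem exists_popular_clique {V : Type} (M : SimpleGraph V) (S A : Finset V)
    (r : V → ℕ) (hr : Set.InjOn r S) (c t : ℕ)
    (h : ∀ v ∈ S, #(S.filter fun w => M.Adj v w ∧ r v < r w) ≤ c)
    (K : V → Finset V) (hK : ∀ a ∈ A, K a ⊆ S) (hne : ∀ a ∈ A, (K a).Nonempty)
    (hcl : ∀ a ∈ A, ∀ x ∈ K a, ∀ y ∈ K a, x ≠ y → M.Adj x y)
    (hA : #S * 2 ^ c * t < #A) : ∃ Q : Finset V, t < #(A.filter fun a => K a = Q) := by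
  let up : V → Finset V := fun v => S.filter fun w => M.Adj v w ∧ r v < r w
  let C : Finset (Finset V) := S.biUnion fun v => (up v).powerset.image (insert v)
  have hC : #C ≤ #S * 2 ^ c := by
    refine Finset.card_biUnion_le_card_mul _ _ _ fun v hv => ?_
    refine Finset.card_image_le.trans ?_
    rw [Finset.card_powerset]
    exact Nat.pow_le_pow_right (by norm_num) (h v hv)
  have hmap : ∀ a ∈ A, K a ∈ C := by
    intro a ha
    obtain ⟨v, hv, hmin⟩ := Finset.exists_min_image (K a) r (hne a ha)
    refine Finset.mem_biUnion.2 ⟨v, hK a ha hv, Finset.mem_image.2 ⟨(K a).erase v, ?_, ?_⟩⟩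
    · rw [Finset.mem_powerset]
      intro w hw
      rw [Finset.mem_erase] at hw
      refine Finset.mem_filter.2 ⟨hK a ha hw.2, hcl a ha v hv w hw.2 hw.1.symm, ?_⟩
      exact lt_of_le_of_ne (hmin w hw.2) fun e => hw.1 (hr (hK a ha hv) (hK a ha hw.2) e).symm
    · exact Finset.insert_erase hv
  obtain ⟨Q, -, hQ⟩ := Finset.exists_lt_card_fiber_of_mul_lt_card_of_maps_to hmap
    (lt_of_le_of_lt (Nat.mul_le_mul_right t hC) hA)
  exact ⟨Q, hQ⟩

/-- If `Q` is a clique of `M` of size `#T`, completely joined to a set `F` of at least `|H|`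
vertices, then `H` embeds in `M`, with the vertex cover `T` of `H` mapped onto `Q`. -/
theorem minorIn_of_clique_join {α V : Type} [Fintype α] (H : SimpleGraph α) (T : Finset α)
    (hT : ∀ x y, H.Adj x y → x ∈ T ∨ y ∈ T) (M : SimpleGraph V) (S : Set V) (Q F : Finset V)
    (hQS : ∀ q ∈ Q, q ∈ S) (hFS : ∀ q ∈ F, q ∈ S) (hQ : #Q = #T) (hF : Fintype.card α ≤ #F)
    (hcl : ∀ x ∈ Q, ∀ y ∈ Q, x ≠ y → M.Adj x y) (hjoin : ∀ x ∈ Q, ∀ y ∈ F, M.Adj x y) :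
    MinorIn H M S := by
  obtain ⟨e⟩ : Nonempty (T ≃ Q) := by
    rw [← Fintype.card_eq]; simpa using hQ.symm
  obtain ⟨f⟩ : Nonempty (α ↪ F) := by
    apply Function.Embedding.nonempty_of_card_le; simpa using hF
  let g : α → V := fun a => if h : a ∈ T then e ⟨a, h⟩ else f a
  have gT : ∀ a (h : a ∈ T), g a = e ⟨a, h⟩ := fun a h => dif_pos h
  have gF : ∀ a (h : a ∉ T), g a = f a := fun a h => dif_neg h
  have hginj : Function.Injective g := by
    intro a b hab
    by_cases ha : a ∈ T <;> by_cases hb : b ∈ T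
    · rw [gT a ha, gT b hb] at hab
      simpa using e.injective (Subtype.ext hab)
    · rw [gT a ha, gF b hb] at hab
      exact absurd hab (hjoin _ (e ⟨a, ha⟩).2 _ (f b).2).ne
    · rw [gF a ha, gT b hb] at hab
      exact absurd hab.symm (hjoin _ (e ⟨b, hb⟩).2 _ (f a).2).ne
    · rw [gF a ha, gF b hb] at hab
      exact f.injective (Subtype.ext hab)
  refine ⟨fun a => {g a}, ?_, fun a => connected_singleton M _, ?_, ?_⟩
  · intro a
    rw [Set.singleton_subset_iff]
    by_cases ha : a ∈ T
    · rw [gT a ha]; exact hQS _ (e ⟨a, ha⟩).2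
    · rw [gF a ha]; exact hFS _ (f a).2
  · intro a b hab
    simpa using fun h => hab (hginj h)
  · intro a b hab
    refine ⟨g a, rfl, g b, rfl, ?_⟩
    by_cases ha : a ∈ T <;> by_cases hb : b ∈ T
    · have hne : g a ≠ g b := fun h => hab.ne (hginj h)
      rw [gT a ha, gT b hb] at hne ⊢
      exact hcl _ (e ⟨a, ha⟩).2 _ (e ⟨b, hb⟩).2 hne
    · rw [gT a ha, gF b hb]
      exact hjoin _ (e ⟨a, ha⟩).2 _ (f b).2
    · rw [gF a ha, gT b hb]
      exact (hjoin _ (e ⟨b, hb⟩).2 _ (f a).2).symm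
    · exact absurd (hT a b hab) (by tauto)

/-! ### Defective colouring from light edges -/

/-- If every subgraph of `G` with an edge has a non-isolated vertex of degree less than `k` or an edge
with both ends of degree at most `l`, then `G` is `(k, l)`-colourable: such a vertex can be
coloured last, and such an edge can be put back without harm. -/
theorem defColorable_of_light {V : Type} [Fintype V] (k l : ℕ) (hk : 1 ≤ k) (G : SimpleGraph V)
    (h : ∀ G' ≤ G, (∃ u v, G'.Adj u v) →
      (∃ v, 1 ≤ #(G'.neighborFinset v) ∧ #(G'.neighborFinset v) < k) ∨
      (∃ x y, G'.Adj x y ∧ #(G'.neighborFinset x) ≤ l ∧ #(G'.neighborFinset y) ≤ l)) :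
    DefColorable G k l := by
  induction G using WellFoundedLT.induction with
  | ind G ih =>
    by_cases hE : ∃ u v, G.Adj u v
    · rcases h G le_rfl hE with ⟨v, h1, h2⟩ | ⟨x, y, hxy, hx, hy⟩
      · obtain ⟨w, hw⟩ := Finset.card_pos.1 h1
        rw [SimpleGraph.mem_neighborFinset] at hw
        let G' : SimpleGraph V := G.deleteIncidenceSet v
        have hle : G' ≤ G := G.deleteIncidenceSet_le v
        have hadj : ∀ a b, G'.Adj a b ↔ G.Adj a b ∧ a ≠ v ∧ b ≠ v :=
          fun a b => G.deleteIncidenceSet_adj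
        have hlt : G' < G := lt_of_le_of_ne hle fun e => by
          have := (hadj v w).1 (e ▸ hw)
          exact this.2.1 rfl
        obtain ⟨c, hc⟩ := ih G' hlt fun G'' hG'' => h G'' (hG''.trans hle)
        obtain ⟨j, hj⟩ : ∃ j : Fin k, j ∉ (G.neighborFinset v).image c := by
          by_contra! hcon
          have : (Finset.univ : Finset (Fin k)) ⊆ (G.neighborFinset v).image c :=
            fun j _ => hcon j
          have := (Finset.card_le_card this).trans Finset.card_image_le
          rw [Finset.card_univ, Fintype.card_fin] at this
          omega
        have hj' : ∀ w, G.Adj v w → c w ≠ j := fun w hw e =>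
          hj (Finset.mem_image.2 ⟨w, by simpa using hw, e⟩)
        refine ⟨Function.update c v j, fun a => ?_⟩
        by_cases hav : a = v
        · subst hav
          have : {w | G.Adj a w ∧ Function.update c a j w = Function.update c a j a} = ∅ := by
            ext w
            simp only [Set.mem_ofPred_eq, Set.mem_empty_iff_false, iff_false, not_and]
            intro hw
            rw [Function.update_self, Function.update_of_ne hw.ne']
            exact hj' w hw
          rw [this]; simp
        · refine (Set.ncard_le_ncard ?_ (Set.toFinite _)).trans (hc a)
          rintro w ⟨hw, he⟩
          have hwv : w ≠ v := by
            intro hwv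
            rw [hwv, Function.update_self, Function.update_of_ne hav] at he
            exact hj' a (hwv ▸ hw.symm) he.symm
          rw [Function.update_of_ne hav, Function.update_of_ne hwv] at he
          exact ⟨(hadj a w).2 ⟨hw, hav, hwv⟩, he⟩
      · let G' : SimpleGraph V := G.deleteEdges {s(x, y)}
        have hle : G' ≤ G := G.deleteEdges_le _
        have hlt : G' < G := lt_of_le_of_ne hle fun e => by
          have : G'.Adj x y := e ▸ hxy
          simp [G'] at this
        obtain ⟨c, hc⟩ := ih G' hlt fun G'' hG'' => h G'' (hG''.trans hle)
        have hdeg : ∀ a, #(G.neighborFinset a) ≤ l →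
            {w | G.Adj a w ∧ c w = c a}.ncard ≤ l := by
          intro a ha
          refine le_trans ?_ ha
          rw [← Set.ncard_coe_finset]
          refine Set.ncard_le_ncard ?_ (Set.toFinite _)
          intro w hw
          simpa using hw.1
        refine ⟨c, fun a => ?_⟩
        by_cases hax : a = x
        · exact hax ▸ hdeg x hx
        by_cases hay : a = y
        · exact hay ▸ hdeg y hy
        refine (Set.ncard_le_ncard ?_ (Set.toFinite _)).trans (hc a)
        rintro w ⟨hw, he⟩
        refine ⟨?_, he⟩
        simp [G', hw, hax, hay]
    · refine ⟨fun _ => ⟨0, hk⟩, fun v => ?_⟩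
      push Not at hE
      simp [hE]

/-! ### Light edges in graphs without an `H` minor -/

/-- Let `A` be an independent set whose neighbours lie in `B`. Contract a maximal set `X ⊆ A` of
vertices onto neighbours so that each creates its own edge `p a q a` between two of its
neighbours. In the resulting minor `M` the neighbourhood of every vertex of `A \ X` is a clique. -/
theorem exists_maximal_contraction {α V : Type} [Fintype V] (H : SimpleGraph α)
    (G : SimpleGraph V) (A B : Finset V) (hAB : ∀ a ∈ A, ∀ w, G.Adj a w → w ∈ B)
    (hdis : Disjoint A B) :
    ∃ (X : Finset V) (M : SimpleGraph V) (p q : V → V), X ⊆ A ∧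
      (MinorIn H M {v | v ∉ X} → MinorIn H G Set.univ) ∧
      (∀ u v, u ∉ X → v ∉ X → G.Adj u v → M.Adj u v) ∧
      (∀ a ∈ A, a ∉ X → ∀ u v, G.Adj a u → G.Adj a v → u ≠ v → M.Adj u v) ∧
      (∀ a ∈ X, p a ∈ B ∧ q a ∈ B ∧ M.Adj (p a) (q a)) ∧
      (∀ a ∈ X, ∀ b ∈ X, s(p a, q a) = s(p b, q b) → a = b) := by
  let valid : Finset V × (V → V) × (V → V) → Prop := fun z => z.1 ⊆ A ∧
    (∀ a ∈ z.1, G.Adj a (z.2.1 a) ∧ G.Adj a (z.2.2 a) ∧ z.2.1 a ≠ z.2.2 a) ∧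
    ∀ a ∈ z.1, ∀ b ∈ z.1, s(z.2.1 a, z.2.2 a) = s(z.2.1 b, z.2.2 b) → a = b
  obtain ⟨⟨X, p, q⟩, hval, hmax⟩ := Finset.exists_max_image (Finset.univ.filter valid)
    (fun z => #z.1) ⟨(∅, id, id), by simp [valid]⟩
  rw [Finset.mem_filter] at hval
  obtain ⟨-, hXA, hpq, hinj⟩ := hval
  dsimp only at hXA hpq hinj hmax
  have hB : ∀ v ∈ B, v ∉ X := fun v hv hvX => Finset.disjoint_left.1 hdis (hXA hvX) hv
  let M : SimpleGraph V :=
    { Adj := fun u v => (u ∉ X ∧ v ∉ X ∧ G.Adj u v) ∨ ∃ a ∈ X, s(p a, q a) = s(u, v)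
      symm := ⟨fun u v h => by
        rcases h with ⟨h1, h2, h3⟩ | ⟨a, ha, h⟩
        · exact Or.inl ⟨h2, h1, h3.symm⟩
        · exact Or.inr ⟨a, ha, h.trans Sym2.eq_swap⟩⟩
      loopless := ⟨fun u h => by
        rcases h with ⟨h1, h2, h3⟩ | ⟨a, ha, h⟩
        · exact h3.ne rfl
        · apply (hpq a ha).2.2
          rw [Sym2.eq_iff] at h
          rcases h with h | h <;> exact h.1.trans h.2.symm⟩ }
  refine ⟨X, M, p, q, hXA, ?_, ?_, ?_, ?_, hinj⟩
  · intro h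
    refine h.comp G Set.univ (fun v => insert v {a | a ∈ X ∧ p a = v}) (fun _ _ => Set.subset_univ _)
      ?_ ?_ ?_
    · intro w hw
      refine connected_star G w _ ?_
      rintro a ⟨ha, rfl⟩
      exact (hpq a ha).1.symm
    · intro w hw w' hw' hne
      rw [Set.disjoint_left]
      rintro z (rfl | ⟨h1, rfl⟩) (h2 | ⟨h2, h3⟩)
      · exact hne h2
      · exact hw h2
      · exact hw' (h2 ▸ h1)
      · exact hne h3
    · rintro w hw w' hw' (⟨-, -, h⟩ | ⟨a, ha, h⟩)
      · exact ⟨w, Set.mem_insert _ _, w', Set.mem_insert _ _, h⟩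
      · rw [Sym2.eq_iff] at h
        rcases h with ⟨h1, h2⟩ | ⟨h1, h2⟩
        · exact ⟨a, Or.inr ⟨ha, h1⟩, w', Set.mem_insert _ _, h2 ▸ (hpq a ha).2.1⟩
        · exact ⟨w, Set.mem_insert _ _, a, Or.inr ⟨ha, h1⟩, h2 ▸ (hpq a ha).2.1.symm⟩
  · intro u v hu hv huv
    exact Or.inl ⟨hu, hv, huv⟩
  · intro a haA haX u v hu hv huv
    by_contra hM
    -- Otherwise `a` could be contracted too, creating the edge `uv`.
    have hnew : ∀ b ∈ X, s(p b, q b) ≠ s(u, v) := fun b hb h => hM (Or.inr ⟨b, hb, h⟩)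
    have hbne : ∀ b ∈ X, b ≠ a := fun b hb h => haX (h ▸ hb)
    have := hmax (insert a X, Function.update p a u, Function.update q a v) (by
      rw [Finset.mem_filter]
      refine ⟨Finset.mem_univ _, Finset.insert_subset haA hXA, ?_, ?_⟩
      · intro b hb
        rcases Finset.mem_insert.1 hb with rfl | hb
        · simpa using ⟨hu, hv, huv⟩
        · simpa [Function.update_of_ne (hbne b hb)] using hpq b hb
      · intro b hb b' hb' h
        dsimp only at h
        rcases Finset.mem_insert.1 hb with rfl | hbX <;>
          rcases Finset.mem_insert.1 hb' with rfl | hbX'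
        · rfl
        · rw [Function.update_self, Function.update_self, Function.update_of_ne (hbne b' hbX'),
            Function.update_of_ne (hbne b' hbX')] at h
          exact absurd h.symm (hnew b' hbX')
        · rw [Function.update_self, Function.update_self, Function.update_of_ne (hbne b hbX),
            Function.update_of_ne (hbne b hbX)] at h
          exact absurd h (hnew b hbX)
        · rw [Function.update_of_ne (hbne b' hbX'), Function.update_of_ne (hbne b hbX),
            Function.update_of_ne (hbne b' hbX'), Function.update_of_ne (hbne b hbX)] at h
          exact hinj b hbX b' hbX' h)
    dsimp only at this
    rw [Finset.card_insert_of_notMem haX] at this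
    omega
  · intro a ha
    exact ⟨hAB a (hXA ha) _ (hpq a ha).1, hAB a (hXA ha) _ (hpq a ha).2.1,
      Or.inr ⟨a, ha, rfl⟩⟩

/-- In a graph without an `H` minor, an independent set `A` of vertices of degree at least `#T`,
where `T` is a vertex cover of `H`, is at most a constant factor larger than any set `B`
containing its neighbourhood. -/
theorem exists_independent_bound {α : Type} [Fintype α] (H : SimpleGraph α) (T : Finset α)
    (hT : ∀ x y, H.Adj x y → x ∈ T ∨ y ∈ T) (hne : T.Nonempty) :
    ∃ N : ℕ, ∀ (V : Type) [Fintype V] (G : SimpleGraph V) (A B : Finset V), ¬ IsMinor H G →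
      (∀ a ∈ A, ∀ w, G.Adj a w → w ∈ B) → Disjoint A B →
      (∀ a ∈ A, #T ≤ #(G.neighborFinset a)) → #A ≤ N * #B := by
  obtain ⟨c, hc⟩ := exists_degenerate_rank H
  refine ⟨c + 2 ^ c * Fintype.card α, fun V _ G A B hG hAB hdis hdeg => ?_⟩
  obtain ⟨X, M, p, q, hXA, hminor, hGM, hclique, hpq, hinj⟩ :=
    exists_maximal_contraction H G A B hAB hdis
  have hM : ¬ MinorIn H M {v | v ∉ X} := fun h => hG (hminor h).isMinor
  have hBX : ∀ v ∈ B, v ∉ X := fun v hv hvX => Finset.disjoint_left.1 hdis (hXA hvX) hv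
  obtain ⟨r, hr, hup⟩ := hc V M B (fun h => hM (h.mono le_rfl fun v hv => hBX v hv))
  have hX : #X ≤ c * #B := by
    refine le_trans ?_ (card_upward_pairs_le M B r c hup)
    refine Finset.card_le_card_of_injOn
      (fun a => if r (p a) < r (q a) then (p a, q a) else (q a, p a)) ?_ ?_
    · intro a ha
      obtain ⟨h1, h2, h3⟩ := hpq a ha
      have hne : r (p a) ≠ r (q a) := fun h => h3.ne (hr h1 h2 h)
      simp only [Finset.coe_filter, Finset.mem_product, Set.mem_ofPred_eq]
      split_ifs with hlt
      · exact ⟨⟨h1, h2⟩, h3, hlt⟩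
      · exact ⟨⟨h2, h1⟩, h3.symm, by simp only; omega⟩
    · intro a ha b hb h
      apply hinj a ha b hb
      have hs : ∀ a, s(p a, q a) = Sym2.mk (if r (p a) < r (q a) then (p a, q a) else (q a, p a)).1
          (if r (p a) < r (q a) then (p a, q a) else (q a, p a)).2 := by
        intro a
        split_ifs
        · rfl
        · exact Sym2.eq_swap
      dsimp only at h
      rw [hs a, hs b, h]
  have hrest : #(A \ X) ≤ #B * 2 ^ c * Fintype.card α := by
    by_contra! hlt
    have hsub : ∀ a, ∃ K : Finset V, a ∈ A → K ⊆ G.neighborFinset a ∧ #K = #T := by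
      intro a
      by_cases ha : a ∈ A
      · obtain ⟨K, hK⟩ := Finset.exists_subset_card_eq (hdeg a ha)
        exact ⟨K, fun _ => hK⟩
      · exact ⟨∅, fun h => absurd h ha⟩
    choose K hK using hsub
    have hKadj : ∀ a ∈ A, ∀ w ∈ K a, G.Adj a w := fun a ha w hw => by
      simpa using (hK a ha).1 hw
    have hA : ∀ a ∈ A \ X, a ∈ A ∧ a ∉ X := fun a ha => Finset.mem_sdiff.1 ha
    have hcl : ∀ a ∈ A \ X, ∀ x ∈ K a, ∀ y ∈ K a, x ≠ y → M.Adj x y := fun a ha x hx y hy =>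
      hclique a (hA a ha).1 (hA a ha).2 x y (hKadj a (hA a ha).1 x hx) (hKadj a (hA a ha).1 y hy)
    obtain ⟨Q, hQ⟩ := exists_popular_clique M B (A \ X) r hr c (Fintype.card α) hup K
      (fun a ha w hw => hAB a (hA a ha).1 w (hKadj a (hA a ha).1 w hw))
      (fun a ha => Finset.card_pos.1 (by rw [(hK a (hA a ha).1).2]; exact hne.card_pos)) hcl hlt
    obtain ⟨a, haQ⟩ := Finset.card_pos.1 (lt_of_le_of_lt (Nat.zero_le _) hQ)
    obtain ⟨ha, rfl⟩ := Finset.mem_filter.1 haQ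
    have hQB : ∀ w ∈ K a, w ∉ X := fun w hw =>
      hBX w (hAB a (hA a ha).1 w (hKadj a (hA a ha).1 w hw))
    refine hM (minorIn_of_clique_join H T hT M _ (K a) _ hQB ?_ (hK a (hA a ha).1).2 hQ.le
      (hcl a ha) ?_)
    · intro b hb
      exact (hA b (Finset.mem_filter.1 hb).1).2
    · intro x hx b hb
      obtain ⟨hb, hKb⟩ := Finset.mem_filter.1 hb
      refine hGM x b (hQB x hx) (hA b hb).2 (hKadj b (hA b hb).1 x ?_).symm
      rw [hKb]; exact hx
  have hsum := Finset.card_sdiff_add_card_eq_card hXA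
  have : (c + 2 ^ c * Fintype.card α) * #B = c * #B + #B * 2 ^ c * Fintype.card α := by ring
  omega

/-- Light edges: a graph without an `H` minor that has an edge has a non-isolated vertex of degree
less than `#T` or an edge with both ends of bounded degree. Otherwise the vertices of small degree
are independent, hence at most a constant factor more numerous than the vertices of large degree,
which contradicts the linear bound on the number of edges. -/
theorem exists_light_edge {α : Type} [Fintype α] (H : SimpleGraph α) (T : Finset α)
    (hT : ∀ x y, H.Adj x y → x ∈ T ∨ y ∈ T) (hne : T.Nonempty) :
    ∃ l : ℕ, ∀ (V : Type) [Fintype V] (G : SimpleGraph V), ¬ IsMinor H G →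
      (∃ u v, G.Adj u v) →
      (∃ v, 1 ≤ #(G.neighborFinset v) ∧ #(G.neighborFinset v) < #T) ∨
      (∃ x y, G.Adj x y ∧ #(G.neighborFinset x) ≤ l ∧ #(G.neighborFinset y) ≤ l) := by
  obtain ⟨N, hN⟩ := exists_independent_bound H T hT hne
  obtain ⟨c, hc⟩ := exists_degenerate_rank H
  refine ⟨2 * c * (N + 1), fun V _ G hG hE => ?_⟩
  by_contra! hcon
  obtain ⟨hdeg, hlight⟩ := hcon
  obtain ⟨u, v, huv⟩ := hE
  set l := 2 * c * (N + 1) with hl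
  let A : Finset V := Finset.univ.filter fun v =>
    1 ≤ #(G.neighborFinset v) ∧ #(G.neighborFinset v) ≤ l
  let B : Finset V := Finset.univ.filter fun v => l < #(G.neighborFinset v)
  have hpos : ∀ x y, G.Adj x y → 1 ≤ #(G.neighborFinset x) := fun x y h =>
    Finset.card_pos.2 ⟨y, by simpa using h⟩
  have mA : ∀ x, x ∈ A ↔ 1 ≤ #(G.neighborFinset x) ∧ #(G.neighborFinset x) ≤ l := fun x => by
    rw [Finset.mem_filter]; simp only [Finset.mem_univ, true_and]
  have mB : ∀ x, x ∈ B ↔ l < #(G.neighborFinset x) := fun x => by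
    rw [Finset.mem_filter]; simp only [Finset.mem_univ, true_and]
  have hAB : ∀ a ∈ A, ∀ w, G.Adj a w → w ∈ B := fun a ha w haw =>
    (mB w).2 (hlight a w haw ((mA a).1 ha).2)
  have hdis : Disjoint A B := by
    rw [Finset.disjoint_left]
    intro x hxA hxB
    have := ((mA x).1 hxA).2
    have := (mB x).1 hxB
    omega
  have hA := hN V G A B hG hAB hdis fun a ha => hdeg a ((mA a).1 ha).1
  have hcover : ∀ x y, G.Adj x y → x ∈ A ∪ B := by
    intro x y hxy
    rw [Finset.mem_union, mA, mB]
    have := hpos x y hxy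
    omega
  obtain ⟨r, hr, hup⟩ := hc V G (A ∪ B) (fun h => hG h.isMinor)
  have hsum := sum_degree_le G (A ∪ B) r hr c hup
  have hlow : #B * (l + 1) ≤ ∑ v ∈ A ∪ B, #((A ∪ B).filter (G.Adj v)) := by
    rw [← smul_eq_mul, ← Finset.sum_const]
    refine (Finset.sum_le_sum fun b hb => ?_).trans
      (Finset.sum_le_sum_of_subset Finset.subset_union_right)
    refine le_trans ((mB b).1 hb) (Finset.card_le_card ?_)
    intro w hw
    rw [SimpleGraph.mem_neighborFinset] at hw
    exact Finset.mem_filter.2 ⟨hcover w b hw.symm, hw⟩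
  rw [Finset.card_union_of_disjoint hdis] at hsum
  have hBpos : 0 < #B := by
    rw [Finset.card_pos]
    rcases Finset.mem_union.1 (hcover u v huv) with h | h
    · exact ⟨v, hAB u h v huv⟩
    · exact ⟨u, h⟩
  have h1 : 2 * c * (#A + #B) ≤ 2 * c * ((N + 1) * #B) :=
    Nat.mul_le_mul_left _ (by linarith)
  have h2 : 2 * c * ((N + 1) * #B) = #B * l := by rw [hl]; ring
  have h3 : #B * (l + 1) = #B * l + #B := by ring
  omega

end DefectiveProof

/-- For every finite simple graph `H` with at least one edge, there exists an integer `d` such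
that every finite simple `H`-minor-free graph is `(τ(H), d)`-colourable. -/
theorem stmt14 {α : Type} [Fintype α] (H : SimpleGraph α) (hH : H.edgeSet.Nonempty) :
    ∃ d : ℕ, ∀ (V : Type) [Fintype V] (G : SimpleGraph V),
      ¬ IsMinor H G → DefColorable G (vertexCoverNumber H) d := by
  classical
  obtain ⟨S, hS, hcov⟩ : vertexCoverNumber H ∈
      {k | ∃ S : Set α, S.ncard = k ∧ ∀ ⦃x y⦄, H.Adj x y → x ∈ S ∨ y ∈ S} :=
    Nat.sInf_mem ⟨_, Set.univ, rfl, fun x y _ => Or.inl trivial⟩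
  have hT : ∀ x y, H.Adj x y → x ∈ S.toFinset ∨ y ∈ S.toFinset := by
    intro x y h
    simpa using hcov h
  have hne : S.toFinset.Nonempty := by
    obtain ⟨e, he⟩ := hH
    induction e with
    | _ x y => rcases hT x y he with h | h <;> exact ⟨_, h⟩
  rw [Set.ncard_eq_toFinset_card'] at hS
  obtain ⟨l, hl⟩ := exists_light_edge H S.toFinset hT hne
  refine ⟨l, fun V _ G hG => ?_⟩
  rw [← hS]
  refine defColorable_of_light _ l hne.card_pos G fun G' hG' hE => ?_
  have hG'' : ¬ IsMinor H G' := by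
    rintro ⟨B, h1, h2, h3, h4⟩
    exact hG (MinorIn.mono (S := Set.univ) ⟨B, fun _ => Set.subset_univ _, h2, h3, h4⟩
      hG' subset_rfl).isMinor
  exact hl V G' hG'' hE
end

section
/- For every finite simple graph H with tree-depth td(H) ≥ 3 and every integer N ≥ 1, the graph G(td(H)−1, N) contains no H minor and is not (td(H)−2, N)-colourable. Consequently, for every integer d there exists a finite simple graph with no H minor that is not (td(H)−2, d)-colourable. -/
/-!
Tree-depth does not increase under taking minors: given a forest order on `G` and branch sets of an
`H` minor, each branch set is connected and hence has a least element, and comparing these least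
elements is a forest order on `H` of no larger height (`IsMinor.exists_forestOrder`). The graph
`G(s, N)`, being built by adding dominant vertices to disjoint unions, has tree-depth at most `s`
(`exists_forestOrder_GGraph`), so `G(td(H) - 1, N)` has no `H` minor.

A colouring of `G(s, N)` with defect at most `N` uses at least `s` colours
(`le_ncard_range_of_defect`): if the colour of the dominant vertex occurred in all `N + 1` copies
of `G(s - 1, N)`, that vertex would have `N + 1` neighbours of its own colour; so some copy avoids
this colour, and by induction uses `s - 1` further ones.

For the last claim the graph `G(td(H) - 1, d)` serves.
-/

open SimpleGraph

universe u v

/-! ### Tree-depth is minor-monotone -/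

/-- A nonempty connected vertex set in a graph with a forest order has a least element: a minimal
element stays below everything that can be reached from it inside the set. -/
theorem exists_root_of_connected {V : Type u} [Finite V] {G : SimpleGraph V} {r : V → V → Prop}
    (hr : IsForestOrder G r) (B : Set V) (hne : B.Nonempty) (hB : (G.induce B).Connected) :
    ∃ m ∈ B, ∀ x ∈ B, r m x := by
  obtain ⟨hpo, hch, hadj⟩ := hr
  let P : PartialOrder V :=
    { le := r
      le_refl := hpo.refl
      le_trans := hpo.trans
      le_antisymm := hpo.antisymm }
  obtain ⟨m, hm⟩ := B.toFinite.exists_minimal hne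
  have hmin : ∀ y ∈ B, r y m → y = m := fun y hy h => hpo.antisymm _ _ h (hm.2 hy h)
  refine ⟨m, hm.1, fun x hx => ?_⟩
  obtain ⟨w⟩ := hB.preconnected ⟨m, hm.1⟩ ⟨x, hx⟩
  have key : ∀ (a b : B), (G.induce B).Walk a b → r m a → r m b := by
    intro a b w
    induction w with
    | nil => exact id
    | @cons a b c h _ ih =>
      intro ha
      apply ih
      have hab : G.Adj a b := h
      rcases hadj _ _ hab with h1 | h1
      · exact hpo.trans _ _ _ ha h1
      · by_cases hmb : m = b
        · rw [← hmb]; exact hpo.refl m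
        rcases hch a (show m ∈ {u | r u a} from ha) h1 hmb with h2 | h2
        · exact h2
        · exact absurd (hmin b b.2 h2).symm hmb
  exact key _ _ w (hpo.refl m)

/-- A forest order on `G` is transported to any minor `H` of `G`, without increasing the height,
by comparing the least elements of the branch sets. -/
theorem IsMinor.exists_forestOrder {V : Type u} {α : Type v} [Finite V] {G : SimpleGraph V}
    {H : SimpleGraph α} (hM : IsMinor H G) {r : V → V → Prop} (hr : IsForestOrder G r) {k : ℕ}
    (hk : ∀ v, {u | r u v}.ncard ≤ k) :
    ∃ q : α → α → Prop, IsForestOrder H q ∧ ∀ v, {u | q u v}.ncard ≤ k := by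
  obtain ⟨B, hne, hconn, hdis, hadj⟩ := hM
  choose m hmB hmin using fun a => exists_root_of_connected hr (B a) (hne a) (hconn a)
  obtain ⟨hpo, hch, hcomp⟩ := hr
  have hinj : Function.Injective m := by
    intro a b hab
    by_contra hne
    exact Set.disjoint_left.1 (hdis hne) (hmB a) (hab ▸ hmB b)
  have hchain : ∀ x y z, r x z → r y z → r x y ∨ r y x := by
    intro x y z hx hy
    by_cases hxy : x = y
    · exact Or.inl (hxy ▸ hpo.refl x)
    · exact hch z hx hy hxy
  refine ⟨fun a b => r (m a) (m b), ⟨?_, ?_, ?_⟩, ?_⟩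
  · exact
      { refl := fun a => hpo.refl _
        trans := fun a b c => hpo.trans _ _ _
        antisymm := fun a b h1 h2 => hinj (hpo.antisymm _ _ h1 h2) }
  · intro v a ha b hb _
    exact hchain _ _ _ ha hb
  · intro a b hab
    obtain ⟨x, hx, y, hy, hxy⟩ := hadj a b hab
    rcases hcomp x y hxy with h | h
    · exact hchain _ _ y (hpo.trans _ _ _ (hmin a x hx) h) (hmin b y hy)
    · exact hchain _ _ x (hmin a x hx) (hpo.trans _ _ _ (hmin b y hy) h)
  · intro v
    refine le_trans ?_ (hk (m v))
    exact Set.ncard_le_ncard_of_injOn m (fun a ha => ha) hinj.injOn (Set.toFinite _)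

/-! ### The graphs `GGraph t N` -/

instance instFiniteGVert (t N : ℕ) : Finite (GVert t N) := by
  induction t with
  | zero => exact inferInstanceAs (Finite (Fin (N + 2)))
  | succ t ih => exact inferInstanceAs (Finite (Option (Fin (N + 1) × GVert t N)))

/-- The dominant vertex added in the construction of `GGraph (t + 1) N`. -/
def gRoot (t N : ℕ) : GVert (t + 1) N := (none : Option (Fin (N + 1) × GVert t N))

/-- The vertex of `GGraph (t + 1) N` corresponding to `a` in the `i`-th copy of `GGraph t N`. -/
def gCopy (t N : ℕ) (i : Fin (N + 1)) (a : GVert t N) : GVert (t + 1) N :=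
  (some (i, a) : Option (Fin (N + 1) × GVert t N))

theorem gCopy_inj {t N : ℕ} {i j : Fin (N + 1)} {a b : GVert t N} :
    gCopy t N i a = gCopy t N j b ↔ i = j ∧ a = b := by
  simp only [gCopy]
  exact ⟨fun h => by simpa using Option.some.inj h, by rintro ⟨rfl, rfl⟩; rfl⟩

theorem gRoot_adj_gCopy {t N : ℕ} (i : Fin (N + 1)) (a : GVert t N) :
    (GGraph (t + 1) N).Adj (gRoot t N) (gCopy t N i a) :=
  (SimpleGraph.fromRel_adj _ _ _).2 ⟨fun h => Option.some_ne_none _ h.symm, Or.inl trivial⟩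

theorem gCopy_adj_gCopy {t N : ℕ} {i j : Fin (N + 1)} {a b : GVert t N} :
    (GGraph (t + 1) N).Adj (gCopy t N i a) (gCopy t N j b) ↔
      i = j ∧ (GGraph t N).Adj a b := by
  refine (SimpleGraph.fromRel_adj _ _ _).trans ⟨?_, ?_⟩
  · rintro ⟨-, ⟨h1, h2⟩ | ⟨h1, h2⟩⟩
    · exact ⟨h1, h2⟩
    · exact ⟨h1.symm, h2.symm⟩
  · rintro ⟨h1, h2⟩
    exact ⟨fun h => h2.ne (gCopy_inj.1 h).2, Or.inl ⟨h1, h2⟩⟩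

/-- The relation on `GGraph (t + 1) N` obtained from a relation `r` on `GGraph t N`: the
dominant vertex lies below everything, and each copy carries `r`. -/
def liftRel {t N : ℕ} (r : GVert t N → GVert t N → Prop) (x y : GVert (t + 1) N) : Prop :=
  x = gRoot t N ∨ ∃ i a b, x = gCopy t N i a ∧ y = gCopy t N i b ∧ r a b

theorem gVert_cases {t N : ℕ} (x : GVert (t + 1) N) :
    x = gRoot t N ∨ ∃ i a, x = gCopy t N i a :=
  match x with
  | none => Or.inl rfl
  | some (i, a) => Or.inr ⟨i, a, rfl⟩

theorem gCopy_ne_gRoot {t N : ℕ} (i : Fin (N + 1)) (a : GVert t N) :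
    gCopy t N i a ≠ gRoot t N := Option.some_ne_none _

theorem liftRel_gRoot {t N : ℕ} {r : GVert t N → GVert t N → Prop} (y : GVert (t + 1) N) :
    liftRel r (gRoot t N) y := Or.inl rfl

theorem liftRel_gCopy_gRoot {t N : ℕ} {r : GVert t N → GVert t N → Prop} {i : Fin (N + 1)}
    {a : GVert t N} : ¬ liftRel r (gCopy t N i a) (gRoot t N) := by
  rintro (h | ⟨j, b, c, -, h, -⟩)
  · exact gCopy_ne_gRoot _ _ h
  · exact gCopy_ne_gRoot _ _ h.symm

theorem liftRel_gCopy_gCopy {t N : ℕ} {r : GVert t N → GVert t N → Prop} {i j : Fin (N + 1)}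
    {a b : GVert t N} : liftRel r (gCopy t N i a) (gCopy t N j b) ↔ i = j ∧ r a b := by
  constructor
  · rintro (h | ⟨k, c, d, h1, h2, h⟩)
    · exact absurd h (gCopy_ne_gRoot _ _)
    · obtain ⟨rfl, rfl⟩ := gCopy_inj.1 h1
      obtain ⟨rfl, rfl⟩ := gCopy_inj.1 h2
      exact ⟨rfl, h⟩
  · rintro ⟨rfl, h⟩
    exact Or.inr ⟨i, a, b, rfl, rfl, h⟩

/-- The star `GGraph 0 N` has a forest order of height at most `2`, rooted at its centre. -/
theorem exists_forestOrder_star (N : ℕ) :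
    ∃ r : Fin (N + 2) → Fin (N + 2) → Prop, IsForestOrder (GGraph 0 N) r ∧
      ∀ v, {u | r u v}.ncard ≤ 2 := by
  refine ⟨fun i j => i = 0 ∨ i = j, ⟨?_, ?_, ?_⟩, ?_⟩
  · exact
      { refl := fun a => Or.inr rfl
        trans := by grind
        antisymm := by grind }
  · intro v a ha b hb _
    simp only [Set.mem_ofPred_eq] at ha hb
    grind
  · intro x y hxy
    rcases ((SimpleGraph.fromRel_adj _ _ _).1 hxy).2 with h | h
    · exact Or.inl (Or.inl h)
    · exact Or.inr (Or.inl h)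
  · intro v
    have hsub : {u : Fin (N + 2) | u = 0 ∨ u = v} ⊆ insert 0 {v} := fun u hu => hu
    have h1 := Set.ncard_le_ncard hsub (Set.toFinite _)
    have h2 := Set.ncard_insert_le (0 : Fin (N + 2)) {v}
    rw [Set.ncard_singleton] at h2
    exact h1.trans h2

/-- `GGraph t N`, i.e. `G(t + 2, N)`, has tree-depth at most `t + 2`. -/
theorem exists_forestOrder_GGraph (t N : ℕ) :
    ∃ r : GVert t N → GVert t N → Prop, IsForestOrder (GGraph t N) r ∧
      ∀ v, {u | r u v}.ncard ≤ t + 2 := by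
  induction t with
  | zero => exact exists_forestOrder_star N
  | succ t ih =>
    obtain ⟨r, ⟨hpo, hch, hadj⟩, hk⟩ := ih
    refine ⟨liftRel r, ⟨?_, ?_, ?_⟩, ?_⟩
    · refine { refl := ?_, trans := ?_, antisymm := ?_ }
      · intro x
        rcases gVert_cases x with rfl | ⟨i, a, rfl⟩
        · exact liftRel_gRoot _
        · exact liftRel_gCopy_gCopy.2 ⟨rfl, hpo.refl a⟩
      · intro x y z hxy hyz
        rcases gVert_cases x with rfl | ⟨i, a, rfl⟩
        · exact liftRel_gRoot _
        rcases gVert_cases y with rfl | ⟨j, b, rfl⟩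
        · exact absurd hxy liftRel_gCopy_gRoot
        rcases gVert_cases z with rfl | ⟨k, c, rfl⟩
        · exact absurd hyz liftRel_gCopy_gRoot
        rw [liftRel_gCopy_gCopy] at hxy hyz ⊢
        exact ⟨hxy.1.trans hyz.1, hpo.trans _ _ _ hxy.2 hyz.2⟩
      · intro x y hxy hyx
        rcases gVert_cases x with rfl | ⟨i, a, rfl⟩ <;> rcases gVert_cases y with rfl | ⟨j, b, rfl⟩
        · rfl
        · exact absurd hyx liftRel_gCopy_gRoot
        · exact absurd hxy liftRel_gCopy_gRoot
        · rw [liftRel_gCopy_gCopy] at hxy hyx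
          exact gCopy_inj.2 ⟨hxy.1, hpo.antisymm _ _ hxy.2 hyx.2⟩
    · intro v x hx y hy hxy
      simp only [Set.mem_ofPred_eq] at hx hy
      rcases gVert_cases x with rfl | ⟨i, a, rfl⟩
      · exact Or.inl (liftRel_gRoot _)
      rcases gVert_cases y with rfl | ⟨j, b, rfl⟩
      · exact Or.inr (liftRel_gRoot _)
      rcases gVert_cases v with rfl | ⟨k, c, rfl⟩
      · exact absurd hx liftRel_gCopy_gRoot
      rw [liftRel_gCopy_gCopy] at hx hy
      obtain ⟨rfl, hx⟩ := hx
      obtain ⟨rfl, hy⟩ := hy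
      have hab : a ≠ b := fun h => hxy (by rw [h])
      rcases hch c hx hy hab with h | h
      · exact Or.inl (liftRel_gCopy_gCopy.2 ⟨rfl, h⟩)
      · exact Or.inr (liftRel_gCopy_gCopy.2 ⟨rfl, h⟩)
    · intro x y hxy
      rcases gVert_cases x with rfl | ⟨i, a, rfl⟩
      · exact Or.inl (liftRel_gRoot _)
      rcases gVert_cases y with rfl | ⟨j, b, rfl⟩
      · exact Or.inr (liftRel_gRoot _)
      obtain ⟨rfl, hab⟩ := gCopy_adj_gCopy.1 hxy
      simpa only [liftRel_gCopy_gCopy, true_and] using hadj a b hab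
    · intro v
      rcases gVert_cases v with rfl | ⟨i, b, rfl⟩
      · have : {u | liftRel r u (gRoot t N)} ⊆ {gRoot t N} := by
          intro u hu
          rcases gVert_cases u with rfl | ⟨i, a, rfl⟩
          · rfl
          · exact absurd hu liftRel_gCopy_gRoot
        have := Set.ncard_le_ncard this (Set.toFinite _)
        rw [Set.ncard_singleton] at this
        omega
      · have : {u | liftRel r u (gCopy t N i b)} ⊆
            insert (gRoot t N) (gCopy t N i '' {a | r a b}) := by
          intro u hu
          rcases gVert_cases u with rfl | ⟨j, a, rfl⟩
          · exact Or.inl rfl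
          · obtain ⟨rfl, h⟩ := liftRel_gCopy_gCopy.1 hu
            exact Or.inr ⟨a, h, rfl⟩
        calc _ ≤ _ := Set.ncard_le_ncard this (Set.toFinite _)
          _ ≤ (gCopy t N i '' {a | r a b}).ncard + 1 := Set.ncard_insert_le _ _
          _ ≤ {a | r a b}.ncard + 1 := by gcongr; exact Set.ncard_image_le (Set.toFinite _)
          _ ≤ t + 1 + 2 := by have := hk b; omega

/-! ### Defective colourings of `GGraph t N` -/

/-- A colouring of the star `GGraph 0 N` with defect at most `N` uses at least two colours, since
the centre has `N + 1` leaves. -/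
theorem two_le_ncard_range_star {C : Type*} [Finite C] (N : ℕ) (c : Fin (N + 2) → C)
    (hc : ∀ v, {w | (GGraph 0 N).Adj v w ∧ c w = c v}.ncard ≤ N) :
    2 ≤ (Set.range c).ncard := by
  by_contra hlt
  have hle : (Set.range c).ncard ≤ 1 := by omega
  have hmono : ∀ i, c i = c 0 := fun i =>
    (Set.ncard_le_one (Set.toFinite _)).1 hle _ ⟨i, rfl⟩ _ ⟨0, rfl⟩
  have hsub : Set.range (Fin.succ : Fin (N + 1) → Fin (N + 2)) ⊆
      {w | (GGraph 0 N).Adj (0 : Fin (N + 2)) w ∧ c w = c 0} := by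
    rintro _ ⟨i, rfl⟩
    exact ⟨(SimpleGraph.fromRel_adj _ _ _).2 ⟨(Fin.succ_ne_zero i).symm, Or.inl rfl⟩, hmono _⟩
  have h1 := (Set.ncard_le_ncard hsub (Set.toFinite _)).trans (hc (0 : Fin (N + 2)))
  rw [Set.ncard_range_of_injective (Fin.succ_injective _), Nat.card_fin] at h1
  omega

/-- A colouring of `GGraph t N` with defect at most `N` uses at least `t + 2` colours: in the
inductive step, the colour of the dominant vertex is missing from one of the `N + 1` copies. -/
theorem le_ncard_range_of_defect {C : Type*} [Finite C] (t N : ℕ) (c : GVert t N → C)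
    (hc : ∀ v, {w | (GGraph t N).Adj v w ∧ c w = c v}.ncard ≤ N) :
    t + 2 ≤ (Set.range c).ncard := by
  induction t with
  | zero => exact two_le_ncard_range_star N c hc
  | succ t ih =>
    have hmiss : ∃ i, ∀ a, c (gCopy t N i a) ≠ c (gRoot t N) := by
      by_contra! hall
      choose a ha using hall
      have hsub : Set.range (fun i => gCopy t N i (a i)) ⊆
          {w | (GGraph (t + 1) N).Adj (gRoot t N) w ∧ c w = c (gRoot t N)} := by
        rintro _ ⟨i, rfl⟩
        exact ⟨gRoot_adj_gCopy _ _, ha i⟩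
      have h1 := (Set.ncard_le_ncard hsub (Set.toFinite _)).trans (hc _)
      rw [Set.ncard_range_of_injective (fun i j h => (gCopy_inj.1 h).1), Nat.card_fin] at h1
      omega
    obtain ⟨i, hi⟩ := hmiss
    have h2 : t + 2 ≤ (Set.range fun a => c (gCopy t N i a)).ncard := by
      refine ih _ fun v => le_trans ?_ (hc (gCopy t N i v))
      exact Set.ncard_le_ncard_of_injOn (gCopy t N i)
        (fun w hw => ⟨gCopy_adj_gCopy.2 ⟨rfl, hw.1⟩, hw.2⟩)
        (fun a _ b _ h => (gCopy_inj.1 h).2) (Set.toFinite _)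
    have h3 : insert (c (gRoot t N)) (Set.range fun a => c (gCopy t N i a)) ⊆ Set.range c := by
      rintro _ (rfl | ⟨a, rfl⟩) <;> exact ⟨_, rfl⟩
    have h4 := Set.ncard_le_ncard h3 (Set.toFinite _)
    rw [Set.ncard_insert_of_notMem (by rintro ⟨a, ha⟩; exact hi a ha) (Set.toFinite _)] at h4
    omega

theorem not_defColorable_GGraph (t N : ℕ) : ¬ DefColorable (GGraph t N) (t + 1) N := by
  rintro ⟨c, hc⟩
  have h1 := le_ncard_range_of_defect t N c hc
  have h2 := Set.ncard_le_card (Set.range c)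
  rw [Nat.card_fin] at h2
  omega

theorem not_isMinor_GGraph {α : Type v} (H : SimpleGraph α) (t N : ℕ)
    (ht : t + 2 < treeDepth H) : ¬ IsMinor H (GGraph t N) := by
  intro hM
  obtain ⟨r, hr, hk⟩ := exists_forestOrder_GGraph t N
  exact absurd (Nat.sInf_le (hM.exists_forestOrder hr hk)) (not_le.2 ht)

/-- For every finite simple graph `H` with tree-depth at least 3 and every `N ≥ 1`, the graph
`G(td(H)-1, N)` has no `H` minor and is not `(td(H)-2, N)`-colourable; consequently, for every
`d` there is an `H`-minor-free finite simple graph that is not `(td(H)-2, d)`-colourable. -/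
theorem stmt15 {α : Type} [Fintype α] (H : SimpleGraph α) (h3 : 3 ≤ treeDepth H)
    (N : ℕ) (hN : 1 ≤ N) :
    (¬ IsMinor H (GGraph (treeDepth H - 3) N) ∧
      ¬ DefColorable (GGraph (treeDepth H - 3) N) (treeDepth H - 2) N) ∧
    ∀ d : ℕ, ∃ (W : Type) (_ : Fintype W) (G : SimpleGraph W),
      ¬ IsMinor H G ∧ ¬ DefColorable G (treeDepth H - 2) d := by
  have hk : treeDepth H - 2 = (treeDepth H - 3) + 1 := by omega
  have hmain : ∀ M, ¬ IsMinor H (GGraph (treeDepth H - 3) M) ∧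
      ¬ DefColorable (GGraph (treeDepth H - 3) M) (treeDepth H - 2) M := fun M =>
    ⟨not_isMinor_GGraph H _ M (by omega), hk ▸ not_defColorable_GGraph _ M⟩
  exact ⟨hmain N, fun d => ⟨_, Fintype.ofFinite _, _, hmain d⟩⟩
end
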